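/- arXiv:1709.06608 — 5 statements merged into one kernel-verified Lean document; each statement's English description precedes it below -/
import Mathlib

section
/- (Generalized Pauli theorem, odd case) Let n = p + q be odd. Suppose γ₁,…,γ_n and β₁,…,β_n are two families of elements of Cl_{p,q} satisfying γ_a γ_b + γ_b γ_a = 2η_{ab}·e and β_a β_b + β_b β_a = 2η_{ab}·e for all a, b ∈ {1,…,n}, where η = diag(1,…,1,−1,…,−1) (p pluses, q minuses), and assume additionally that β₁β₂⋯β_n = γ₁γ₂⋯γ_n. Then there exists an invertible element T ∈ Cl_{p,q} such that γ_a = T^{−1} β_a T for all a = 1,…,n; moreover T is unique up to multiplication by an invertible element of the center of Cl_{p,q}. -/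
open CliffordAlgebra

/-- The quadratic form of signature `(p, q)` on `ℝ^(p+q)`:
`Q(x) = x₁² + ⋯ + x_p² − x_{p+1}² − ⋯ − x_{p+q}²`. -/
noncomputable def Qpq (p q : ℕ) : QuadraticForm ℝ (Fin (p + q) → ℝ) :=
  QuadraticMap.weightedSumSquares ℝ (fun i : Fin (p + q) => if (i : ℕ) < p then (1 : ℝ) else -1)

/-- The real Clifford algebra `Cl_{p,q}`. -/
noncomputable abbrev Cl (p q : ℕ) : Type := CliffordAlgebra (Qpq p q)

/-- The generators `e_a` of `Cl_{p,q}`. -/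
noncomputable def gen (p q : ℕ) (i : Fin (p + q)) : Cl p q :=
  ι (Qpq p q) (Pi.single i 1)

/-- The basis element `e_A` of `Cl_{p,q}` attached to an ordered multi-index `A`:
the product of the generators with indices in `A`, in increasing order (`e_∅ = 1`). -/
noncomputable def basisEl (p q : ℕ) (A : Finset (Fin (p + q))) : Cl p q :=
  ((A.sort (· ≤ ·)).map (gen p q)).prod


/-- The diagonal matrix `η = diag(1,…,1,−1,…,−1)` with `p` pluses and `q` minuses. -/
def etaPQ (p q : ℕ) (a b : Fin (p + q)) : ℝ :=
  if a = b then (if (a : ℕ) < p then 1 else -1) else 0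

section PauliAux

def MM {U : Type*} [Group U] {n : ℕ} (x : Fin n → U) (s : Fin n → ZMod 2) : U :=
  (List.ofFn fun i => x i ^ (s i).val).prod

def PRel {U : Type*} [Group U] [HasDistribNeg U] {n : ℕ} (η : Fin n → U) (x : Fin n → U) : Prop :=
  (∀ i, x i * x i = η i) ∧ ∀ i j, i ≠ j → x i * x j = -(x j * x i)

theorem PRel.tail {U : Type*} [Group U] [HasDistribNeg U] {n : ℕ} {η x : Fin (n+1) → U}
    (h : PRel η x) : PRel (fun i => η i.succ) (fun i => x i.succ) :=
  ⟨fun i => h.1 _, fun i j hij => h.2 _ _ (by simpa using hij)⟩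

theorem MM_succ {U : Type*} [Group U] {n : ℕ} (x : Fin (n+1) → U) (s : Fin (n+1) → ZMod 2) :
    MM x s = x 0 ^ (s 0).val * MM (fun i => x i.succ) (fun i => s i.succ) := by
  simp [MM, List.ofFn_succ]

theorem MM_zero {U : Type*} [Group U] : ∀ {n : ℕ} (x : Fin n → U), MM x 0 = 1
  | 0, x => by simp [MM]
  | n+1, x => by
    rw [MM_succ]
    have := MM_zero (fun i : Fin n => x i.succ)
    simp only [Pi.zero_apply, ZMod.val_zero, pow_zero, one_mul]
    exact this

theorem comm_gen {U : Type*} [Group U] [HasDistribNeg U] : ∀ {n : ℕ} (x : Fin n → U)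
    (s : Fin n → ZMod 2) (y : U) (k : Fin n → ℕ)
    (_ : ∀ j, y * x j = (-1) ^ k j * (x j * y)),
    y * MM x s = (-1) ^ (∑ j, k j * (s j).val) * (MM x s * y)
  | 0, x, s, y, k, h => by simp [MM]
  | n+1, x, s, y, k, h => by
    have ih := comm_gen (fun i : Fin n => x i.succ) (fun i => s i.succ) y (fun i => k i.succ)
      (fun j => h _)
    rw [MM_succ, Fin.sum_univ_succ, pow_add]
    have h0 : y * x 0 ^ (s 0).val = (-1) ^ (k 0 * (s 0).val) * (x 0 ^ (s 0).val * y) := by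
      have h01 : s 0 = 0 ∨ s 0 = 1 := by generalize s 0 = a; revert a; decide
      rcases h01 with h1 | h1 <;> rw [h1]
      · simp
      · simpa [ZMod.val_one] using h 0
    rw [← mul_assoc, h0, mul_assoc, mul_assoc, ih]
    rcases neg_one_pow_eq_or U (∑ j : Fin n, k j.succ * (s j.succ).val) with h2 | h2 <;>
    rw [h2] <;> simp [mul_assoc]

theorem comm_sign {U : Type*} [Group U] [HasDistribNeg U] {n : ℕ} {η x : Fin n → U}
    (h : PRel η x) (s : Fin n → ZMod 2) (i : Fin n) :
    (∑ j, s j + s i = 0 → x i * MM x s = MM x s * x i) ∧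
    (∑ j, s j + s i ≠ 0 → x i * MM x s = -(MM x s * x i)) := by
  have := comm_gen x s (x i) (fun j => if j = i then 0 else 1) (by
    intro j
    by_cases hj : j = i
    · simp [hj]
    · simpa [hj] using h.2 i j (Ne.symm hj))
  have hc : ((∑ j, (if j = i then 0 else 1) * (s j).val : ℕ) : ZMod 2) = ∑ j, s j + s i := by
    push_cast
    have : ∀ j, ((if j = i then 0 else 1 : ZMod 2)) * (s j).val
        = s j + if j = i then s i else 0 := by
      intro j
      split_ifs with hj
      · subst hj; simp [CharTwo.add_self_eq_zero]
      · simp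
    rw [Finset.sum_congr rfl fun j _ => (?_ : _ = s j + if j = i then s i else 0)]
    · simp [Finset.sum_add_distrib]
    · simpa using this j
  rw [this]
  constructor
  · intro h0
    rw [← hc, ZMod.natCast_eq_zero_iff_even] at h0
    rw [h0.neg_one_pow, one_mul]
  · intro h0
    rw [← hc, Ne, ZMod.natCast_eq_zero_iff_even, Nat.not_even_iff_odd] at h0
    rw [h0.neg_one_pow, neg_mul, one_mul]

theorem left_mul_MM {U : Type*} [Group U] [HasDistribNeg U] : ∀ {n : ℕ} (η : Fin n → U)
    (_ : ∀ i, η i = 1 ∨ η i = -1) (i : Fin n) (s : Fin n → ZMod 2),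
    ∃ ε : U, (ε = 1 ∨ ε = -1) ∧ ∀ x, PRel η x →
      x i * MM x s = ε * MM x (s + Pi.single i 1)
  | 0, _, _, i, _ => i.elim0
  | n+1, η, hη, i, s => by
    have h01 : s 0 = 0 ∨ s 0 = 1 := by generalize s 0 = a; revert a; decide
    refine Fin.cases ?_ (fun i => ?_) i
    · have hs : (fun i : Fin n => (s + Pi.single 0 1 : Fin (n+1) → ZMod 2) i.succ)
          = fun i => s i.succ := by
        funext j; simp
      rcases h01 with h1 | h1
      · refine ⟨1, Or.inl rfl, fun x hx => ?_⟩
        rw [MM_succ, MM_succ, hs]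
        simp [h1, ZMod.val_one]
      · refine ⟨η 0, hη 0, fun x hx => ?_⟩
        rw [MM_succ, MM_succ, hs]
        have : (1 + 1 : ZMod 2) = 0 := by decide
        simp [h1, ZMod.val_one, this, ← hx.1 0, mul_assoc]
    · obtain ⟨ε, hε, H⟩ := left_mul_MM (fun i => η i.succ) (fun i => hη _) i (fun i => s i.succ)
      have hs : (fun j : Fin n => (s + Pi.single i.succ 1 : Fin (n+1) → ZMod 2) j.succ)
          = (fun j => s j.succ) + Pi.single i 1 := by
        funext j; simp [Pi.single_apply]
      have hs0 : (s + Pi.single i.succ 1 : Fin (n+1) → ZMod 2) 0 = s 0 := by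
        simp
      rcases h01 with h1 | h1
      · refine ⟨ε, hε, fun x hx => ?_⟩
        rw [MM_succ, MM_succ, hs, hs0, h1]
        simpa using H _ hx.tail
      · refine ⟨-ε, by rcases hε with h | h <;> simp [h], fun x hx => ?_⟩
        rw [MM_succ, MM_succ, hs, hs0, h1]
        have := H _ hx.tail
        simp only [ZMod.val_one, pow_one]
        rw [← mul_assoc, hx.2 _ _ (Fin.succ_ne_zero i), neg_mul, mul_assoc, this]
        rcases hε with h | h <;> simp [h]

theorem exists_sign_ne {m : ℕ} (hm : Even m) (s : Fin m → ZMod 2) (hs : s ≠ 0) :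
    ∃ i, ∑ j, s j + s i ≠ 0 := by
  by_contra! hcon
  have h1 : ∀ i, s i = ∑ j, s j := fun i => by
    have := hcon i
    rwa [add_comm, CharTwo.add_eq_zero] at this
  apply hs
  have h2 : ∑ j, s j = 0 := by
    have : ∑ j, s j = ∑ j : Fin m, ∑ j, s j := Finset.sum_congr rfl fun i _ => h1 i
    rw [this]
    simp only [Finset.sum_const, Finset.card_univ, Fintype.card_fin, nsmul_eq_mul]
    rw [(ZMod.natCast_eq_zero_iff_even).2 hm, zero_mul]
  funext i
  rw [h1 i, h2]; rfl

variable {A : Type*} [Ring A] [Algebra ℝ A]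

noncomputable def avg {m : ℕ} (x y : Fin m → Aˣ) (F : A) : A :=
  ∑ s : Fin m → ZMod 2, ((MM x s : Aˣ) : A) * F * ((MM y s)⁻¹ : Aˣ)

theorem avg_comm {m : ℕ} {η x y : Fin m → Aˣ} (hη : ∀ i, η i = 1 ∨ η i = -1)
    (hx : PRel η x) (hy : PRel η y) (F : A) (i : Fin m) :
    (x i : A) * avg x y F = avg x y F * y i := by
  have key : (x i : A) * avg x y F * ((y i)⁻¹ : Aˣ) = avg x y F := by
    unfold avg
    rw [Finset.mul_sum, Finset.sum_mul]
    rw [← Equiv.sum_comp (Equiv.addRight (Pi.single i 1 : Fin m → ZMod 2))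
      (fun s => ((MM x s : Aˣ) : A) * F * ((MM y s)⁻¹ : Aˣ))]
    refine Finset.sum_congr rfl fun s _ => ?_
    obtain ⟨ε, hε, H⟩ := left_mul_MM η hη i s
    have h1 := H x hx
    have h2 := H y hy
    have h3 : (x i : A) * (((MM x s : Aˣ) : A) * F * ((MM y s)⁻¹ : Aˣ)) * ((y i)⁻¹ : Aˣ)
      = ((x i * MM x s : Aˣ) : A) * F * (((y i * MM y s)⁻¹ : Aˣ) : A) := by
      simp [mul_assoc]
    rw [h3, h1, h2]
    rcases hε with h | h <;> simp [h]
  rw [← Units.mul_inv_eq_iff_eq_mul]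
  exact key

theorem avg_full {m : ℕ} {x : Fin m → Aˣ} (u : A) (hu : ∀ i, (x i : A) * u = u * x i) :
    avg x x u = ((2:ℝ)^m) • u := by
  have h : ∀ s, ((MM x s : Aˣ) : A) * u * ((MM x s)⁻¹ : Aˣ) = u := by
    intro s
    rw [Units.mul_inv_eq_iff_eq_mul]
    have : MM x s ∈ Submonoid.comap (Units.coeHom A) (Submonoid.centralizer {u}) := by
      apply Submonoid.list_prod_mem
      intro z hz
      obtain ⟨i, rfl⟩ := (List.mem_ofFn' _ _).1 hz
      apply pow_mem
      simp [Submonoid.mem_centralizer_iff, hu]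
    simp only [Submonoid.mem_comap, Submonoid.mem_centralizer_iff, Units.coeHom_apply] at this
    exact (this u rfl).symm
  unfold avg
  simp only [h, Finset.sum_const, Finset.card_univ]
  rw [← Nat.cast_smul_eq_nsmul ℝ]
  simp

theorem avg_zero {m : ℕ} {η x : Fin m → Aˣ} (hη : ∀ i, η i = 1 ∨ η i = -1)
    (hx : PRel η x) (u : Aˣ) (hu : ∀ i, x i * u = u * x i ∨ x i * u = -(u * x i))
    (i : Fin m) (hi : x i * u = -(u * x i)) : avg x x (u : A) = 0 := by
  have hk : ∀ j, ∃ k : ℕ, u * x j = (-1) ^ k * (x j * u) := by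
    intro j
    rcases hu j with h | h
    · exact ⟨0, by simp [h]⟩
    · exact ⟨1, by simp [h]⟩
  choose k hk using hk
  have h1 : ∃ κ : ℤ, avg x x (u : A) = κ • (u : A) := by
    refine ⟨∑ s : Fin m → ZMod 2, (-1) ^ (∑ j, k j * (s j).val), ?_⟩
    unfold avg
    rw [Finset.sum_smul]
    refine Finset.sum_congr rfl fun s _ => ?_
    rw [Units.mul_inv_eq_iff_eq_mul]
    have h2 := congrArg (Units.val) (comm_gen x s u k hk)
    rcases Nat.even_or_odd (∑ j, k j * (s j).val) with h | h
    · rw [h.neg_one_pow] at h2 ⊢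
      simpa using h2.symm
    · rw [h.neg_one_pow] at h2 ⊢
      have h2 : (u : A) * MM x s = - (MM x s * u) := by simpa using h2
      simp [h2]
  obtain ⟨κ, hκ⟩ := h1
  have h2 := avg_comm hη hx hx (u : A) i
  have hi' : (x i : A) * u = -(u * x i) := by simpa using congrArg Units.val hi
  have h3 : (x i : A) * avg x x (u : A) = -(avg x x (u : A) * x i) := by
    rw [hκ, mul_smul_comm, hi', smul_mul_assoc, smul_neg]
  rw [h2] at h3
  have h4 : (2 : ℝ) • (avg x x (u : A) * x i) = 0 := by
    rw [two_smul]; nth_rewrite 1 [h3]; simp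
  have h5 := (smul_eq_zero_iff_right (two_ne_zero)).1 h4
  simpa using h5

theorem avg_mul_right {m : ℕ} {x : Fin m → Aˣ} (u c : A) (hc : ∀ i, (x i : A) * c = c * x i) :
    avg x x (u * c) = avg x x u * c := by
  unfold avg
  rw [Finset.sum_mul]
  refine Finset.sum_congr rfl fun s _ => ?_
  have : c * ((MM x s)⁻¹ : Aˣ) = ((MM x s)⁻¹ : Aˣ) * c := by
    have : MM x s ∈ Subgroup.comap (MonoidHom.id _) (⟨(Submonoid.comap (Units.coeHom A) (Submonoid.centralizer {c})), by
        intro z hz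
        simp only [Submonoid.mem_carrier, Submonoid.mem_comap, Submonoid.mem_centralizer_iff, Units.coeHom_apply, Set.mem_singleton_iff, forall_eq] at hz ⊢
        exact ((Commute.units_inv_right (u := z) hz))⟩ : Subgroup Aˣ) := by
      apply Subgroup.list_prod_mem
      intro z hz
      obtain ⟨i, rfl⟩ := (List.mem_ofFn' _ _).1 hz
      apply pow_mem
      change (x i : Aˣ) ∈ (Submonoid.comap (Units.coeHom A) (Submonoid.centralizer {c}))
      simp [Submonoid.mem_centralizer_iff, hc]
    change MM x s ∈ (Submonoid.comap (Units.coeHom A) (Submonoid.centralizer {c})) at this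
    simp only [Submonoid.mem_comap, Submonoid.mem_centralizer_iff, Units.coeHom_apply] at this
    have h : Commute c ((MM x s : Aˣ) : A) := this c rfl
    exact h.units_inv_right
  rw [mul_assoc, mul_assoc, this, mul_assoc, mul_assoc]

theorem orth {m : ℕ} (hm : Even m) {η x : Fin m → Aˣ} (hη : ∀ i, η i = 1 ∨ η i = -1)
    (hx : PRel η x) (s t : Fin m → ZMod 2) (hst : s ≠ t) :
    avg x x (((MM x t)⁻¹ * MM x s : Aˣ) : A) = 0 := by
  obtain ⟨i, hi⟩ := exists_sign_ne hm (s - t) (sub_ne_zero.2 hst)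
  have inv1 : ∀ u v : Aˣ, u * v = v * u → u * v⁻¹ = v⁻¹ * u := by
    intro u v h; exact (Commute.inv_right h)
  have inv2 : ∀ u v : Aˣ, u * v = -(v * u) → u * v⁻¹ = -(v⁻¹ * u) := by
    intro u v h
    rw [mul_inv_eq_iff_eq_mul, neg_mul, mul_assoc, h]; simp
  have H : ∀ u v w : Aˣ, (u * v = v * u → u * w = w * u → u * (v⁻¹ * w) = (v⁻¹ * w) * u) ∧
    (u * v = v * u → u * w = -(w * u) → u * (v⁻¹ * w) = -((v⁻¹ * w) * u)) ∧
    (u * v = -(v * u) → u * w = w * u → u * (v⁻¹ * w) = -((v⁻¹ * w) * u)) ∧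
    (u * v = -(v * u) → u * w = -(w * u) → u * (v⁻¹ * w) = (v⁻¹ * w) * u) := by
    intro u v w
    refine ⟨fun h1 h2 => ?_, fun h1 h2 => ?_, fun h1 h2 => ?_, fun h1 h2 => ?_⟩
    · rw [← mul_assoc, inv1 _ _ h1, mul_assoc, h2, mul_assoc]
    · rw [← mul_assoc, inv1 _ _ h1, mul_assoc, h2, mul_assoc]; simp
    · rw [← mul_assoc, inv2 _ _ h1, neg_mul, mul_assoc, h2, mul_assoc]
    · rw [← mul_assoc, inv2 _ _ h1, neg_mul, mul_assoc, h2, mul_assoc]; simp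
  have key : ∀ j, (∑ l, (s - t) l + (s - t) j) = (∑ l, s l + s j) + (∑ l, t l + t j) := by
    intro j
    simp only [Pi.sub_apply, CharTwo.sub_eq_add, Finset.sum_add_distrib]; ring
  refine avg_zero hη hx _ (fun j => ?_) i ?_
  · by_cases h1 : (∑ l, s l + s j) = 0 <;> by_cases h2 : (∑ l, t l + t j) = 0
    · exact Or.inl ((H _ _ _).1 ((comm_sign hx t j).1 h2) ((comm_sign hx s j).1 h1))
    · exact Or.inr ((H _ _ _).2.2.1 ((comm_sign hx t j).2 h2) ((comm_sign hx s j).1 h1))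
    · exact Or.inr ((H _ _ _).2.1 ((comm_sign hx t j).1 h2) ((comm_sign hx s j).2 h1))
    · exact Or.inl ((H _ _ _).2.2.2 ((comm_sign hx t j).2 h2) ((comm_sign hx s j).2 h1))
  · rw [key] at hi
    by_cases h1 : (∑ l, s l + s i) = 0 <;> by_cases h2 : (∑ l, t l + t i) = 0
    · simp [h1, h2] at hi
    · exact ((H _ _ _).2.2.1 ((comm_sign hx t i).2 h2) ((comm_sign hx s i).1 h1))
    · exact ((H _ _ _).2.1 ((comm_sign hx t i).1 h2) ((comm_sign hx s i).2 h1))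
    · exfalso
      revert h1 h2 hi
      generalize (∑ l, s l + s i) = a
      generalize (∑ l, t l + t i) = b
      revert a b; decide

theorem avg_one {m : ℕ} (x : Fin m → Aˣ) : avg x x (1 : A) = ((2:ℝ)^m) • 1 :=
  avg_full 1 (by simp)

theorem decomp {m : ℕ} (hm : Even m) {η x : Fin m → Aˣ} (hη : ∀ i, η i = 1 ∨ η i = -1)
    (hx : PRel η x) (X : A) :
    ∑ s, ((MM x s : Aˣ) : A) * avg x x (((MM x s)⁻¹ : Aˣ) * X) = ((2:ℝ)^m) • X := by
  have : ∀ s, ((MM x s : Aˣ) : A) * avg x x (((MM x s)⁻¹ : Aˣ) * X) =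
      ∑ t, ((MM x s : Aˣ) : A) * MM x t * ((MM x s)⁻¹ : Aˣ) * (X * ((MM x t)⁻¹ : Aˣ)) := by
    intro s
    unfold avg
    rw [Finset.mul_sum]
    exact Finset.sum_congr rfl fun t _ => by simp only [mul_assoc]
  simp only [this]
  rw [Finset.sum_comm]
  have h2 : ∀ t, ∑ s, ((MM x s : Aˣ) : A) * MM x t * ((MM x s)⁻¹ : Aˣ) * (X * ((MM x t)⁻¹ : Aˣ))
      = avg x x ((MM x t : Aˣ) : A) * (X * ((MM x t)⁻¹ : Aˣ)) := by
    intro t; unfold avg; rw [Finset.sum_mul]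
  simp only [h2]
  rw [Finset.sum_eq_single 0]
  · simp [MM_zero, avg_one]
  · intro t _ ht
    have := orth hm hη hx t 0 ht
    rw [MM_zero, inv_one, one_mul] at this
    rw [this, zero_mul]
  · simp

theorem Tsum {m : ℕ} (hm : Even m) {η x y : Fin m → Aˣ} (hη : ∀ i, η i = 1 ∨ η i = -1)
    (hy : PRel η y) (F : A) :
    ∑ c, avg x y (F * MM y c) * ((MM y c)⁻¹ : Aˣ) = ((2:ℝ)^m) • F := by
  have : ∀ c, avg x y (F * MM y c) * ((MM y c)⁻¹ : Aˣ) =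
      ∑ t, ((MM x t : Aˣ) : A) * F * (MM y c * ((MM y t)⁻¹ : Aˣ) * ((MM y c)⁻¹ : Aˣ)) := by
    intro s
    unfold avg
    rw [Finset.sum_mul]
    exact Finset.sum_congr rfl fun t _ => by simp only [mul_assoc]
  simp only [this]
  rw [Finset.sum_comm]
  have h2 : ∀ t, ∑ c, ((MM x t : Aˣ) : A) * F * (MM y c * ((MM y t)⁻¹ : Aˣ) * ((MM y c)⁻¹ : Aˣ))
      = ((MM x t : Aˣ) : A) * F * avg y y (((MM y t)⁻¹ : Aˣ) : A) := by
    intro t; unfold avg; rw [Finset.mul_sum]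
  simp only [h2]
  rw [Finset.sum_eq_single 0]
  · simp [MM_zero, avg_one]
  · intro t _ ht
    have := orth hm hη hy 0 t ht.symm
    rw [MM_zero, mul_one] at this
    rw [this, mul_zero]
  · simp

theorem commute_MM {m : ℕ} {x : Fin m → Aˣ} (u : A) (hu : ∀ i, (x i : A) * u = u * x i)
    (s : Fin m → ZMod 2) : Commute u ((MM x s : Aˣ) : A) := by
  have : MM x s ∈ Submonoid.comap (Units.coeHom A) (Submonoid.centralizer {u}) := by
    apply Submonoid.list_prod_mem
    intro z hz
    obtain ⟨i, rfl⟩ := (List.mem_ofFn' _ _).1 hz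
    apply pow_mem
    simp [Submonoid.mem_centralizer_iff, hu]
  simp only [Submonoid.mem_comap, Submonoid.mem_centralizer_iff, Units.coeHom_apply] at this
  exact this u rfl

theorem omega_comm {m : ℕ} (hm : Even m) {η x : Fin (m+1) → Aˣ} (hx : PRel η x) (i : Fin (m+1)) :
    x i * MM x 1 = MM x 1 * x i := by
  apply (comm_sign hx 1 i).1
  have : ((m : ℕ) : ZMod 2) = 0 := (ZMod.natCast_eq_zero_iff_even).2 hm
  simp [this]
  decide

theorem MM_one_succ {m : ℕ} (x : Fin (m+1) → Aˣ) :
    MM x 1 = x 0 * MM (fun i => x i.succ) 1 := by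
  rw [MM_succ]
  simp only [Pi.one_apply, ZMod.val_one, pow_one]
  rfl

theorem central_of_gen {n : ℕ} {e : Fin n → Aˣ}
    (he : Algebra.adjoin ℝ (Set.range fun i => (e i : A)) = ⊤) (c : A)
    (hc : ∀ i, (e i : A) * c = c * e i) (V : A) : c * V = V * c := by
  have hV : V ∈ Algebra.adjoin ℝ (Set.range fun i => (e i : A)) := by rw [he]; trivial
  induction hV using Algebra.adjoin_induction with
  | mem x hx => obtain ⟨i, rfl⟩ := hx; exact (hc i).symm
  | algebraMap r => exact (Algebra.commutes r c).symm
  | add x y _ _ hx hy => rw [mul_add, add_mul, hx, hy]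
  | mul x y _ _ hx hy => rw [← mul_assoc, hx, mul_assoc, hy, mul_assoc]

theorem central_of_tail {m : ℕ} (hm : Even m) {η e : Fin (m+1) → Aˣ} (hr : PRel η e)
    (he : Algebra.adjoin ℝ (Set.range fun i => (e i : A)) = ⊤) (c : A)
    (hc : ∀ i : Fin m, (e i.succ : A) * c = c * e i.succ) (V : A) : c * V = V * c := by
  apply central_of_gen he
  have h1 : Commute c ((MM (fun i => e i.succ) 1 : Aˣ) : A) := commute_MM c hc 1
  have h2 : Commute c ((MM e 1 : Aˣ) : A) := by
    refine (central_of_gen he _ (fun i => ?_) c).symm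
    have := congrArg Units.val (omega_comm hm hr i)
    simpa using this
  have h0 : e 0 = MM e 1 * (MM (fun i => e i.succ) 1)⁻¹ := by
    rw [MM_one_succ, mul_inv_cancel_right]
  refine Fin.cases ?_ hc
  rw [h0, Units.val_mul]
  exact ((h2.mul_right h1.units_inv_right).eq).symm

theorem span_MM {n : ℕ} {η e : Fin n → Aˣ} (hη : ∀ i, η i = 1 ∨ η i = -1) (hr : PRel η e)
    (he : Algebra.adjoin ℝ (Set.range fun i => (e i : A)) = ⊤) :
    Submodule.span ℝ (Set.range fun s => ((MM e s : Aˣ) : A)) = ⊤ := by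
  set W := Submodule.span ℝ (Set.range fun s => ((MM e s : Aˣ) : A)) with hW
  rw [eq_top_iff]
  intro V hVt
  clear hVt
  have hV : V ∈ Algebra.adjoin ℝ (Set.range fun i => (e i : A)) := by rw [he]; trivial
  have key : ∀ w ∈ W, V * w ∈ W := by
    clear * - hV hη hr hW
    induction hV using Algebra.adjoin_induction with
    | mem x hx =>
      obtain ⟨i, rfl⟩ := hx
      intro w hw
      induction hw using Submodule.span_induction with
      | mem x hx =>
        obtain ⟨s, rfl⟩ := hx
        obtain ⟨ε, hε, H⟩ := left_mul_MM η hη i s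
        have h1 := H e hr
        have h2 : (e i : A) * (MM e s : Aˣ) = ((e i * MM e s : Aˣ) : A) := by simp
        have h3 : ((MM e (s + Pi.single i 1) : Aˣ) : A) ∈ W := Submodule.subset_span ⟨_, rfl⟩
        simp only [h2, h1]
        rcases hε with h | h <;> simpa [h] using h3
      | zero => simp
      | add x y _ _ hx hy => rw [mul_add]; exact W.add_mem hx hy
      | smul r x _ hx => rw [mul_smul_comm]; exact W.smul_mem _ hx
    | algebraMap r => intro w hw; rw [← Algebra.smul_def]; exact W.smul_mem _ hw
    | add x y _ _ hx hy => intro w hw; rw [add_mul]; exact W.add_mem (hx w hw) (hy w hw)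
    | mul x y _ _ hx hy => intro w hw; rw [mul_assoc]; exact hx _ (hy _ hw)
  have := key 1 (Submodule.subset_span ⟨0, by simp [MM_zero]⟩)
  simpa using this

theorem avg_add {m : ℕ} (x y : Fin m → Aˣ) (u v : A) : avg x y (u + v) = avg x y u + avg x y v := by
  simp [avg, mul_add, add_mul, Finset.sum_add_distrib]

theorem avg_smul {m : ℕ} (x y : Fin m → Aˣ) (r : ℝ) (v : A) : avg x y (r • v) = r • avg x y v := by
  simp [avg, Finset.smul_sum]

theorem center_form {m : ℕ} (hm : Even m) {η e : Fin (m+1) → Aˣ}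
    (hη : ∀ i, η i = 1 ∨ η i = -1) (hr : PRel η e)
    (he : Algebra.adjoin ℝ (Set.range fun i => (e i : A)) = ⊤) (c : A)
    (hc : ∀ i : Fin m, (e i.succ : A) * c = c * e i.succ) :
    ∃ a b : ℝ, c = a • 1 + b • ((MM e 1 : Aˣ) : A) := by
  set W := Submodule.span ℝ {(1 : A), ((MM e 1 : Aˣ) : A)} with hW
  have h1W : (1 : A) ∈ W := Submodule.subset_span (by simp)
  have h2W : ((MM e 1 : Aˣ) : A) ∈ W := Submodule.subset_span (by simp)
  have key : ∀ X : A, avg (fun i => e i.succ) (fun i => e i.succ) X ∈ W := by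
    intro X
    have hX : X ∈ Submodule.span ℝ (Set.range fun s => ((MM e s : Aˣ) : A)) := by
      rw [span_MM hη hr he]; trivial
    induction hX using Submodule.span_induction with
    | mem x hx =>
      obtain ⟨s, rfl⟩ := hx
      simp only
      by_cases hs : ∃ i : Fin m, ∑ j, s j + s i.succ ≠ 0
      · obtain ⟨i, hi⟩ := hs
        rw [avg_zero (η := fun i => η i.succ) (fun i => hη _) hr.tail (MM e s) (fun j => ?_) i
          ((comm_sign hr s i.succ).2 hi)]
        · exact W.zero_mem
        · by_cases h : ∑ l, s l + s j.succ = 0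
          · exact Or.inl ((comm_sign hr s j.succ).1 h)
          · exact Or.inr ((comm_sign hr s j.succ).2 h)
      · push Not at hs
        have hs' : ∀ i : Fin m, s i.succ = ∑ j, s j := fun i => by
          have := hs i
          rwa [add_comm, CharTwo.add_eq_zero] at this
        have hs0 : s 0 = ∑ j, s j := by
          have h2 : ∑ j : Fin m, s j.succ = 0 := by
            rw [Finset.sum_congr rfl fun i _ => hs' i]
            simp only [Finset.sum_const, Finset.card_univ, Fintype.card_fin, nsmul_eq_mul]
            rw [(ZMod.natCast_eq_zero_iff_even).2 hm, zero_mul]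
          conv_rhs => rw [Fin.sum_univ_succ, h2, add_zero]
        have hall : ∀ i, s i = ∑ j, s j := Fin.cases hs0 hs'
        have h01 : ∑ j, s j = 0 ∨ ∑ j, s j = 1 := by generalize ∑ j, s j = a; revert a; decide
        rw [avg_full]
        · apply W.smul_mem
          rcases h01 with h | h
          · have : s = 0 := by funext i; rw [hall, h]; rfl
            rw [this, MM_zero]; simpa using h1W
          · have : s = 1 := by funext i; rw [hall, h]; rfl
            rw [this]; exact h2W
        · intro i
          simpa using congrArg Units.val ((comm_sign hr s i.succ).1 (hs i))
    | zero => simp [avg]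
    | add x y _ _ hx hy => rw [avg_add]; exact W.add_mem hx hy
    | smul r x _ hx => rw [avg_smul]; exact W.smul_mem _ hx
  have h := key c
  rw [avg_full c hc] at h
  have h3 := W.smul_mem ((2:ℝ)^m)⁻¹ h
  rw [smul_smul, inv_mul_cancel₀ (by positivity), one_smul] at h3
  obtain ⟨a, b, hab⟩ := Submodule.mem_span_pair.1 h3
  exact ⟨a, b, hab.symm⟩

def cent {m : ℕ} (x : Fin m → Aˣ) : Submodule ℝ A where
  carrier := {c | ∀ i, (x i : A) * c = c * x i}
  add_mem' := by intro a b ha hb i; rw [mul_add, add_mul, ha i, hb i]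
  zero_mem' := by simp
  smul_mem' := by intro r a ha i; rw [mul_smul_comm, smul_mul_assoc, ha i]

noncomputable def Phi {m : ℕ} (x : Fin m → Aˣ) : ((Fin m → ZMod 2) → cent x) →ₗ[ℝ] A where
  toFun z := ∑ s, ((MM x s : Aˣ) : A) * (z s : A)
  map_add' := by intro a b; simp [mul_add, Finset.sum_add_distrib]
  map_smul' := by intro a b; simp [Finset.smul_sum]

theorem Phi_surj {m : ℕ} (hm : Even m) {η x : Fin m → Aˣ} (hη : ∀ i, η i = 1 ∨ η i = -1)
    (hx : PRel η x) : Function.Surjective (Phi x) := by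
  intro X
  refine ⟨fun s => ⟨((2:ℝ)^m)⁻¹ • avg x x (((MM x s)⁻¹ : Aˣ) * X),
    (cent x).smul_mem _ (fun i => avg_comm hη hx hx _ i)⟩, ?_⟩
  simp only [Phi, LinearMap.coe_mk, AddHom.coe_mk, mul_smul_comm]
  rw [← Finset.smul_sum, decomp hm hη hx, smul_smul, inv_mul_cancel₀ (by positivity), one_smul]

theorem avg_sum {m : ℕ} {ι : Type*} (S : Finset ι) (x y : Fin m → Aˣ) (f : ι → A) :
    avg x y (∑ i ∈ S, f i) = ∑ i ∈ S, avg x y (f i) := by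
  simp only [avg, Finset.mul_sum, Finset.sum_mul]
  rw [Finset.sum_comm]

theorem Phi_inj {m : ℕ} (hm : Even m) {η x : Fin m → Aˣ} (hη : ∀ i, η i = 1 ∨ η i = -1)
    (hx : PRel η x) : Function.Injective (Phi x) := by
  rw [← LinearMap.ker_eq_bot, LinearMap.ker_eq_bot']
  intro z hz
  funext t
  have h1 : avg x x (((MM x t)⁻¹ : Aˣ) * Phi x z) = ((2:ℝ)^m) • (z t : A) := by
    simp only [Phi, LinearMap.coe_mk, AddHom.coe_mk]
    rw [Finset.mul_sum, avg_sum, Finset.sum_eq_single t]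
    · rw [Units.inv_mul_cancel_left, avg_full _ (z t).2]
    · intro s _ hs
      rw [← mul_assoc, avg_mul_right _ _ (z s).2]
      have := orth hm hη hx s t hs
      rw [Units.val_mul] at this
      rw [this, zero_mul]
    · simp
  rw [hz] at h1
  have h2 : ((2:ℝ)^m) • (z t : A) = 0 := by rw [← h1]; simp [avg]
  have h3 := (smul_eq_zero_iff_right (by positivity)).1 h2
  exact Subtype.ext h3

theorem cent_central {m : ℕ} (hm : Even m) {η e : Fin (m+1) → Aˣ}
    (hη : ∀ i, η i = 1 ∨ η i = -1) (hr : PRel η e)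
    (he : Algebra.adjoin ℝ (Set.range fun i => (e i : A)) = ⊤)
    (x : Fin m → Aˣ) (hx : PRel (fun i => η i.succ) x) :
    cent x = cent (fun i => e i.succ) := by
  have hfin : Module.Finite ℝ A :=
    ⟨(Submodule.fg_def).2 ⟨_, Set.finite_range _, span_MM hη hr he⟩⟩
  symm
  apply Submodule.eq_of_le_of_finrank_le
  · intro c hc i
    exact (central_of_tail hm hr he c hc _).symm
  · have h1 := LinearMap.finrank_le_finrank_of_injective (Phi_inj hm (fun i => hη i.succ) hx)
    have h2 := LinearMap.finrank_le_finrank_of_surjective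
      (Phi_surj hm (fun i => hη i.succ) hr.tail)
    have h3 := h1.trans h2
    rw [Module.finrank_pi_fintype, Module.finrank_pi_fintype] at h3
    simp only [Finset.sum_const, Finset.card_univ, smul_eq_mul] at h3
    exact Nat.le_of_mul_le_mul_left h3 Fintype.card_pos

theorem MM_intertwine (T : A) : ∀ {m : ℕ} {x y : Fin m → Aˣ}
    (_ : ∀ i, (x i : A) * T = T * y i) (s : Fin m → ZMod 2),
    ((MM x s : Aˣ) : A) * T = T * (MM y s : Aˣ)
  | 0, x, y, h, s => by simp [MM]
  | m+1, x, y, h, s => by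
    have ih := MM_intertwine T (x := fun i : Fin m => x i.succ) (y := fun i => y i.succ)
      (fun i => h _) (fun i => s i.succ)
    have h0 : ((x 0 ^ (s 0).val : Aˣ) : A) * T = T * ((y 0 ^ (s 0).val : Aˣ) : A) := by
      have h01 : s 0 = 0 ∨ s 0 = 1 := by generalize s 0 = a; revert a; decide
      rcases h01 with h1 | h1 <;> rw [h1]
      · simp
      · simpa [ZMod.val_one] using h 0
    rw [MM_succ, MM_succ, Units.val_mul, Units.val_mul, mul_assoc, ih, ← mul_assoc, h0, mul_assoc]

theorem sq_MM : ∀ {n : ℕ} {η x : Fin n → Aˣ} (_ : ∀ i, η i = 1 ∨ η i = -1) (_ : PRel η x)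
    (s : Fin n → ZMod 2), MM x s * MM x s = 1 ∨ MM x s * MM x s = -1
  | 0, η, x, hη, hx, s => by simp [MM]
  | n+1, η, x, hη, hx, s => by
    have ih := sq_MM (fun i => hη i.succ) hx.tail (fun i => s i.succ)
    rw [MM_succ]
    set M := MM (fun i : Fin n => x i.succ) (fun i => s i.succ) with hM
    have h01 : s 0 = 0 ∨ s 0 = 1 := by generalize s 0 = a; revert a; decide
    rcases h01 with h1 | h1 <;> rw [h1]
    · simpa using ih
    · simp only [ZMod.val_one, pow_one]
      have h2 := comm_gen (fun i : Fin n => x i.succ) (fun i => s i.succ) (x 0) (fun _ => 1)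
        (fun j => by simpa using hx.2 0 j.succ (Fin.succ_ne_zero j).symm)
      rw [← hM] at h2
      have h3 : x 0 * M * (x 0 * M) = (x 0 * M) * x 0 * M := by simp only [mul_assoc]
      rw [h3, h2]
      have h4 : ∀ k : ℕ, ((-1) ^ k * (M * x 0) * x 0 * M : Aˣ) = (-1) ^ k * (M * (x 0 * x 0) * M) := by
        intro k; simp only [mul_assoc]
      rw [h4, hx.1]
      rcases neg_one_pow_eq_or Aˣ (∑ j : Fin n, 1 * (s j.succ).val) with h5 | h5 <;>
      rcases hη 0 with h6 | h6 <;> rcases ih with h7 | h7 <;> rw [h5, h6] <;> simp [h7]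

theorem exists_T {m : ℕ} (hm : Even m) {η x y : Fin m → Aˣ} (hη : ∀ i, η i = 1 ∨ η i = -1)
    (hx : PRel η x) (hy : PRel η y) (hZ : ∀ c ∈ cent x, ∀ V : A, c * V = V * c)
    (f : A) (hf : ∀ V : A, f * V = V * f) (hff : f * f = f)
    (hinv : ∀ c ∈ cent x, f * c ≠ 0 → ∃ d, f * c * d = f) :
    ∃ T Y : A, (∀ i, (x i : A) * T = T * y i) ∧ f * T = T ∧ T * Y = f := by
  by_cases hf0 : f = 0
  · exact ⟨0, 0, by simp [hf0]⟩
  have h1 : ∃ c, f * avg x y ((1:A) * (MM y c : Aˣ)) ≠ 0 := by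
    by_contra! hcon
    have h := congrArg (fun v => f * v) (Tsum (x := x) hm hη hy (1 : A))
    simp only [Finset.mul_sum, ← mul_assoc] at h
    rw [Finset.sum_eq_zero (fun c _ => by rw [hcon c, zero_mul])] at h
    rw [mul_smul_comm, mul_one] at h
    exact hf0 ((smul_eq_zero_iff_right (by positivity)).1 h.symm)
  obtain ⟨c, hc⟩ := h1
  set T := f * avg x y ((1:A) * (MM y c : Aˣ)) with hT
  have hTL : ∀ i, (x i : A) * T = T * y i := by
    intro i
    rw [hT, ← mul_assoc, ← hf, mul_assoc, avg_comm hη hx hy, mul_assoc]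
  have hfT : f * T = T := by rw [hT, ← mul_assoc, hff]
  have h2 : ∃ s, avg x x (((MM x s)⁻¹ : Aˣ) * T) ≠ 0 := by
    by_contra! hcon
    have h := decomp hm hη hx T
    simp only [hcon, mul_zero, Finset.sum_const_zero] at h
    exact hc ((smul_eq_zero_iff_right (by positivity)).1 h.symm)
  obtain ⟨s, hs⟩ := h2
  have hMT : ∀ s, ((MM x s : Aˣ) : A) * T = T * (MM y s : Aˣ) := MM_intertwine T hTL
  have h3 : avg x x (((MM x s)⁻¹ : Aˣ) * T) =
      T * ∑ t, ((MM y t : Aˣ) : A) * ((MM y s)⁻¹ : Aˣ) * ((MM x t)⁻¹ : Aˣ) := by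
    unfold avg
    rw [Finset.mul_sum]
    refine Finset.sum_congr rfl fun t _ => ?_
    have h4 : (((MM x s)⁻¹ : Aˣ) : A) * T = T * ((MM y s)⁻¹ : Aˣ) := by
      rw [Units.inv_mul_eq_iff_eq_mul, ← mul_assoc, hMT, Units.mul_inv_cancel_right]
    rw [h4]
    simp only [← mul_assoc]
    rw [hMT]
  set z := avg x x (((MM x s)⁻¹ : Aˣ) * T) with hz
  have hzc : z ∈ cent x := fun i => avg_comm hη hx hx _ i
  have hfz : f * z = z := by rw [h3, ← mul_assoc, hfT]
  obtain ⟨d, hd⟩ := hinv z hzc (by rwa [hfz])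
  have h5 : ∃ Y, T * Y = f := ⟨_, by rw [← mul_assoc, ← h3, ← hfz]; exact hd⟩
  obtain ⟨Y, hY⟩ := h5
  exact ⟨T, Y, hTL, hfT, hY⟩

theorem pauli_abs {m : ℕ} (hm : Even m) {η e β γ : Fin (m+1) → Aˣ}
    (hη : ∀ i, η i = 1 ∨ η i = -1) (hr : PRel η e)
    (he : Algebra.adjoin ℝ (Set.range fun i => (e i : A)) = ⊤)
    (hβ : PRel η β) (hγ : PRel η γ) (hprod : MM β 1 = MM γ 1) :
    ∃ T : Aˣ, (∀ a, (β a : A) * T = T * γ a) ∧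
      ∀ c : A, (∀ a, (β a : A) * c = c * β a) → ∀ V, c * V = V * c := by
  have hfin : Module.Finite ℝ A :=
    ⟨(Submodule.fg_def).2 ⟨_, Set.finite_range _, span_MM hη hr he⟩⟩
  have hart : IsArtinianRing A := IsArtinianRing.of_finite ℝ A
  have hC := cent_central hm hη hr he (fun i => β i.succ) hβ.tail
  have hZ : ∀ c ∈ cent (fun i => β i.succ), ∀ V : A, c * V = V * c := by
    intro c hc
    rw [hC] at hc
    exact central_of_tail hm hr he c hc
  have hform : ∀ c ∈ cent (fun i => β i.succ), ∃ a b : ℝ, c = a • 1 + b • ((MM e 1 : Aˣ) : A) := by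
    intro c hc
    rw [hC] at hc
    exact center_form hm hη hr he c hc
  have hω : ∀ V : A, ((MM e 1 : Aˣ) : A) * V = V * (MM e 1 : Aˣ) := by
    refine central_of_gen he _ fun i => ?_
    simpa using congrArg Units.val (omega_comm hm hr i)
  have hsq : ((MM e 1 : Aˣ) : A) * (MM e 1 : Aˣ) = 1 ∨ ((MM e 1 : Aˣ) : A) * (MM e 1 : Aˣ) = -1 := by
    rcases sq_MM hη hr 1 with h | h
    · exact Or.inl (by simpa using congrArg Units.val h)
    · exact Or.inr (by simpa using congrArg Units.val h)
  have hT : ∃ T Y : A, (∀ i : Fin m, (β i.succ : A) * T = T * γ i.succ) ∧ T * Y = 1 := by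
    generalize ((MM e 1 : Aˣ) : A) = ω at *
    rcases hsq with hsq | hsq
    · have key : ∀ σ : ℝ, σ * σ = 1 → ∃ T Y : A,
          (∀ i : Fin m, (β i.succ : A) * T = T * γ i.succ) ∧
          ((1/2 : ℝ) • (1 + σ • ω)) * T = T ∧ T * Y = ((1/2 : ℝ) • (1 + σ • ω)) := by
        intro σ hσ
        have hfω : ((1/2 : ℝ) • (1 + σ • ω)) * ω = σ • ((1/2 : ℝ) • (1 + σ • ω)) := by
          rw [smul_mul_assoc, add_mul, smul_mul_assoc, hsq, one_mul, smul_comm σ, smul_add σ,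
            smul_smul σ σ, hσ, one_smul, add_comm]
        refine exists_T hm (fun i => hη i.succ) hβ.tail hγ.tail hZ _ ?_ ?_ ?_
        · intro V
          simp only [smul_mul_assoc, mul_smul_comm, add_mul, mul_add, hω V, one_mul, mul_one]
        · nth_rewrite 2 [smul_add]
          rw [mul_add, mul_smul_comm, mul_one, mul_smul_comm, mul_smul_comm, hfω, smul_smul σ σ, hσ,
            one_smul, ← add_smul]
          norm_num
        · intro c hc hne
          obtain ⟨a, b, rfl⟩ := hform c hc
          have h1 : ((1/2 : ℝ) • (1 + σ • ω)) * (a • 1 + b • ω)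
              = (a + b * σ) • ((1/2 : ℝ) • (1 + σ • ω)) := by
            rw [mul_add, mul_smul_comm, mul_smul_comm, hfω, mul_one, smul_smul b, ← add_smul]
          rw [h1] at hne ⊢
          have h2 : a + b * σ ≠ 0 := by
            intro h; rw [h, zero_smul] at hne; exact hne rfl
          refine ⟨(a + b * σ)⁻¹ • 1, ?_⟩
          rw [mul_smul_comm, mul_one, smul_smul, inv_mul_cancel₀ h2, one_smul]
      obtain ⟨T₁, Y₁, h1, h2, h3⟩ := key 1 (by norm_num)
      obtain ⟨T₂, Y₂, h4, h5, h6⟩ := key (-1) (by norm_num)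
      set f₁ := ((1/2 : ℝ) • (1 + (1:ℝ) • ω)) with hf1
      set f₂ := ((1/2 : ℝ) • (1 + (-1:ℝ) • ω)) with hf2
      have c2 : ∀ V, f₂ * V = V * f₂ := by
        intro V
        simp only [hf2, smul_mul_assoc, mul_smul_comm, add_mul, mul_add, hω V, one_mul, mul_one]
      have c1 : ∀ V, f₁ * V = V * f₁ := by
        intro V
        simp only [hf1, smul_mul_assoc, mul_smul_comm, add_mul, mul_add, hω V, one_mul, mul_one]
      have hsum : f₁ + f₂ = 1 := by
        rw [hf1, hf2]; module
      have h12 : f₁ * f₂ = 0 := by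
        simp only [hf1, hf2, smul_mul_assoc, mul_smul_comm, add_mul, mul_add, one_mul, mul_one, hsq]
        module
      have h21 : f₂ * f₁ = 0 := by rw [← c1]; exact h12
      have h11 : f₁ * f₁ = f₁ := by
        have : f₁ * (f₁ + f₂) = f₁ := by rw [hsum, mul_one]
        rwa [mul_add, h12, add_zero] at this
      have h22 : f₂ * f₂ = f₂ := by
        have : f₂ * (f₁ + f₂) = f₂ := by rw [hsum, mul_one]
        rwa [mul_add, h21, zero_add] at this
      refine ⟨T₁ + T₂, Y₁ * f₁ + Y₂ * f₂, fun i => by rw [mul_add, add_mul, h1, h4], ?_⟩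
      have e1 : T₁ * (Y₁ * f₁) = f₁ := by rw [← mul_assoc, h3, h11]
      have e2 : T₂ * (Y₂ * f₂) = f₂ := by rw [← mul_assoc, h6, h22]
      have e3 : T₁ * (Y₂ * f₂) = 0 := by
        rw [← mul_assoc, ← c2, ← h2, ← mul_assoc, ← mul_assoc, h21, zero_mul, zero_mul]
      have e4 : T₂ * (Y₁ * f₁) = 0 := by
        rw [← mul_assoc, ← c1, ← h5, ← mul_assoc, ← mul_assoc, h12, zero_mul, zero_mul]
      rw [add_mul, mul_add, mul_add, e1, e2, e3, e4, add_zero, zero_add, hsum]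
    · obtain ⟨T, Y, h1, _, h3⟩ := exists_T hm (fun i => hη i.succ) hβ.tail hγ.tail hZ 1
        (by simp) (by simp) (by
          intro c hc hne
          obtain ⟨a, b, rfl⟩ := hform c hc
          rw [one_mul] at hne ⊢
          have h2 : a * a + b * b ≠ 0 := by
            intro h
            have ha : a = 0 := by nlinarith [mul_self_nonneg a, mul_self_nonneg b]
            have hb : b = 0 := by nlinarith [mul_self_nonneg a, mul_self_nonneg b]
            simp [ha, hb] at hne
          refine ⟨(a * a + b * b)⁻¹ • (a • 1 - b • ω), ?_⟩
          have h3 : (a • 1 + b • ω) * (a • 1 - b • ω) = (a * a + b * b) • (1 : A) := by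
            simp only [add_mul, mul_sub, smul_mul_assoc, mul_smul_comm, one_mul, mul_one, hsq]
            module
          rw [mul_smul_comm, h3, smul_smul, inv_mul_cancel₀ h2, one_smul])
      exact ⟨T, Y, h1, h3⟩
  obtain ⟨T, Y, hTi, hTY⟩ := hT
  have hYT : Y * T = 1 := mul_eq_one_comm.1 hTY
  refine ⟨⟨T, Y, hTY, hYT⟩, ?_, fun c hc => hZ c fun i => hc _⟩
  refine Fin.cases ?_ hTi
  simp only
  have hw : ∀ V : A, ((MM β 1 : Aˣ) : A) * V = V * (MM β 1 : Aˣ) := by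
    apply hZ
    intro i
    simpa using congrArg Units.val (omega_comm hm hβ i.succ)
  have h0 : ((MM β 1 : Aˣ) : A) * T = T * (MM γ 1 : Aˣ) := by rw [hw, hprod]
  rw [MM_one_succ, MM_one_succ γ, Units.val_mul, Units.val_mul, mul_assoc,
    MM_intertwine T hTi, ← mul_assoc, ← mul_assoc] at h0
  exact (Units.mul_left_inj _).1 h0

theorem prod_eq_MM {n : ℕ} (x : Fin n → Aˣ) :
    ((List.finRange n).map fun i => (x i : A)).prod = ((MM x 1 : Aˣ) : A) := by
  have h : MM x 1 = ((List.finRange n).map x).prod := by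
    simp [MM, List.ofFn_eq_map, ZMod.val_one]
  rw [h, ← Units.coeHom_apply, map_list_prod, List.map_map]
  rfl

theorem lift_units {n : ℕ} (ε : Fin n → ℝ) (hε : ∀ i, ε i = 1 ∨ ε i = -1) (x : Fin n → A)
    (hx : ∀ a b, x a * x b + x b * x a = (2 * (if a = b then ε a else 0)) • (1 : A)) :
    ∃ y : Fin n → Aˣ, (∀ i, (y i : A) = x i) ∧
      PRel (fun i => if ε i = 1 then 1 else -1) y := by
  have hsq : ∀ a, x a * x a = ε a • (1 : A) := by
    intro a
    have h := hx a a
    rw [if_pos rfl, ← two_smul ℝ, mul_smul] at h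
    exact smul_right_injective A (two_ne_zero (α := ℝ)) h
  have hee : ∀ a, ε a * ε a = 1 := by intro a; rcases hε a with h | h <;> rw [h] <;> norm_num
  refine ⟨fun i => ⟨x i, ε i • x i, ?_, ?_⟩, fun i => rfl, ?_, ?_⟩
  · rw [mul_smul_comm, hsq, smul_smul, hee, one_smul]
  · rw [smul_mul_assoc, hsq, smul_smul, hee, one_smul]
  · intro i
    ext
    rcases hε i with h | h
    · simp [hsq, h]
    · have : ¬ ((-1 : ℝ) = 1) := by norm_num
      simp [hsq, h, this]
  · intro i j hij
    ext
    have h := hx i j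
    rw [if_neg hij, mul_zero, zero_smul] at h
    simpa using eq_neg_of_add_eq_zero_left h

theorem pauli_gen {n : ℕ} (hn : Odd n) (ε : Fin n → ℝ) (hε : ∀ i, ε i = 1 ∨ ε i = -1)
    (e γ β : Fin n → A)
    (he : ∀ a b, e a * e b + e b * e a = (2 * (if a = b then ε a else 0)) • (1 : A))
    (hγ : ∀ a b, γ a * γ b + γ b * γ a = (2 * (if a = b then ε a else 0)) • (1 : A))
    (hβ : ∀ a b, β a * β b + β b * β a = (2 * (if a = b then ε a else 0)) • (1 : A))
    (hgen : Algebra.adjoin ℝ (Set.range e) = ⊤)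
    (hprod : ((List.finRange n).map β).prod = ((List.finRange n).map γ).prod) :
    ∃ T : Aˣ,
      (∀ a, γ a = (↑T⁻¹ : A) * β a * (T : A)) ∧
      ∀ T' : Aˣ, (∀ a, γ a = (↑T'⁻¹ : A) * β a * (T' : A)) →
        ∃ Z : Aˣ, (∀ V : A, (Z : A) * V = V * (Z : A)) ∧
          (T' : A) = (Z : A) * (T : A) := by
  obtain ⟨k, rfl⟩ := hn
  obtain ⟨e', he1, he2⟩ := lift_units ε hε e he
  obtain ⟨γ', hγ1, hγ2⟩ := lift_units ε hε γ hγ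
  obtain ⟨β', hβ1, hβ2⟩ := lift_units ε hε β hβ
  obtain rfl : (fun i => (e' i : A)) = e := funext he1
  obtain rfl : (fun i => (γ' i : A)) = γ := funext hγ1
  obtain rfl : (fun i => (β' i : A)) = β := funext hβ1
  rw [prod_eq_MM, prod_eq_MM] at hprod
  obtain ⟨T, hT, hc⟩ := pauli_abs (even_two_mul k) (fun i => by
    by_cases h : ε i = 1 <;> simp [h]) he2 hgen hβ2 hγ2 (Units.ext hprod)
  refine ⟨T, fun a => ?_, fun T' hT' => ⟨T' * T⁻¹, hc _ fun a => ?_, by simp⟩⟩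
  · rw [mul_assoc, hT, Units.inv_mul_cancel_left]
  · have h1 : (β' a : A) * T' = T' * γ' a := by
      have := hT' a
      simp only at this
      rw [this, mul_assoc, Units.mul_inv_cancel_left]
    have h2 : (γ' a : A) * (T⁻¹ : Aˣ) = (T⁻¹ : Aˣ) * β' a := by
      rw [Units.mul_inv_eq_iff_eq_mul, mul_assoc, hT, Units.inv_mul_cancel_left]
    rw [Units.val_mul, ← mul_assoc, h1, mul_assoc, h2, mul_assoc]

end PauliAux

theorem gen_rel (p q : ℕ) (a b : Fin (p + q)) :
    gen p q a * gen p q b + gen p q b * gen p q a = (2 * etaPQ p q a b) • (1 : Cl p q) := by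
  unfold gen
  rw [ι_mul_ι_add_swap, Algebra.algebraMap_eq_smul_one]
  congr 1
  simp only [QuadraticMap.polar, Qpq, QuadraticMap.weightedSumSquares_apply, etaPQ,
    ← Finset.sum_sub_distrib]
  by_cases h : a = b
  · subst h
    rw [Finset.sum_eq_single a]
    · simp; split_ifs <;> norm_num
    · intro j _ hj; simp [hj]
    · simp
  · rw [if_neg h]
    simp only [mul_zero]
    apply Finset.sum_eq_zero
    intro j _
    by_cases h1 : j = a
    · subst h1; simp [h]
    · simp [h1]

theorem gen_adjoin (p q : ℕ) : Algebra.adjoin ℝ (Set.range (gen p q)) = ⊤ := by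
  rw [eq_top_iff, ← adjoin_range_ι]
  apply Algebra.adjoin_le
  rintro _ ⟨v, rfl⟩
  have : v = ∑ i, v i • (Pi.single i 1 : Fin (p + q) → ℝ) := by
    funext j; simp [Finset.sum_apply, Pi.single_apply]
  rw [this, map_sum]
  apply Subalgebra.sum_mem
  intro i _
  rw [map_smul]
  have h : gen p q i ∈ Algebra.adjoin ℝ (Set.range (gen p q)) :=
    Algebra.subset_adjoin (Set.mem_range_self i)
  exact Subalgebra.smul_mem _ h _

/-- Generalized Pauli theorem, odd case: if `n = p + q` is odd, `γ`, `β` satisfy the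
defining anticommutation relations and `β₁⋯β_n = γ₁⋯γ_n`, then there is an
invertible `T` with `γ_a = T⁻¹ β_a T` for all `a`, unique up to multiplication by
an invertible central element. -/
theorem pauli_odd (p q : ℕ) (hn : Odd (p + q)) (γ β : Fin (p + q) → Cl p q)
    (hγ : ∀ a b, γ a * γ b + γ b * γ a = (2 * etaPQ p q a b) • (1 : Cl p q))
    (hβ : ∀ a b, β a * β b + β b * β a = (2 * etaPQ p q a b) • (1 : Cl p q))
    (hprod : ((List.finRange (p + q)).map β).prod = ((List.finRange (p + q)).map γ).prod) :
    ∃ T : (Cl p q)ˣ,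
      (∀ a, γ a = (↑T⁻¹ : Cl p q) * β a * (T : Cl p q)) ∧
      ∀ T' : (Cl p q)ˣ, (∀ a, γ a = (↑T'⁻¹ : Cl p q) * β a * (T' : Cl p q)) →
        ∃ Z : (Cl p q)ˣ, (∀ V : Cl p q, (Z : Cl p q) * V = V * (Z : Cl p q)) ∧
          (T' : Cl p q) = (Z : Cl p q) * (T : Cl p q) := by
  exact pauli_gen hn (fun i => if (i : ℕ) < p then 1 else -1)
    (fun i => by by_cases h : (i : ℕ) < p <;> simp [h]) (gen p q) γ β (gen_rel p q) hγ hβ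
    (gen_adjoin p q) hprod
end

section
/- Let n = p + q and let Γ := {T ∈ Cl_{p,q} : T is invertible and involute(T)·ι(x)·T^{−1} ∈ ι(ℝⁿ) for every x ∈ ℝⁿ} be the Lipschitz group. Define the norm function N(T) := reverse(involute(T))·T. Then: (1) for every T ∈ Γ, N(T) is a nonzero scalar, i.e. N(T) = λ·e for some λ ∈ ℝ, λ ≠ 0; (2) N is multiplicative on Γ: N(UV) = N(U)·N(V) for all U, V ∈ Γ, and N(T^{−1}) = N(T)^{−1}. -/
open CliffordAlgebra

/-- The Lipschitz group `Γ_{p,q}`: invertible elements whose twisted conjugation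
preserves the grade-1 subspace `ι(ℝⁿ)`. -/
def lipschitzGrp (p q : ℕ) : Set (Cl p q) :=
  {T | IsUnit T ∧ ∀ x : Fin (p + q) → ℝ, ∃ y : Fin (p + q) → ℝ,
      involute T * ι (Qpq p q) x * Ring.inverse T = ι (Qpq p q) y}

/-- The norm function `N(T) = reverse(involute(T)) · T`. -/
noncomputable def normN (p q : ℕ) (T : Cl p q) : Cl p q :=
  reverse (involute T) * T

open CliffordAlgebra in
theorem aux_contract {R M : Type*} [CommRing R] [AddCommGroup M] [Module R M]
    (Q : QuadraticForm R M) (v : M) (a : CliffordAlgebra Q) :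
    ι Q v * a - involute a * ι Q v = contractLeft (QuadraticMap.polarBilin Q v) a := by
  induction a using CliffordAlgebra.left_induction with
  | algebraMap r => simp [Algebra.commutes]
  | add x y hx hy => rw [map_add, map_add, ← hx, ← hy]; noncomm_ring
  | ι_mul x m hx =>
    rw [contractLeft_ι_mul, ← hx, map_mul, involute_ι]
    have h := ι_mul_ι_add_swap (Q := Q) v m
    have h2 : ι Q v * ι Q m = algebraMap R _ (QuadraticMap.polar Q v m) - ι Q m * ι Q v := by
      rw [← h]; abel
    rw [← mul_assoc, h2, QuadraticMap.polarBilin_apply_apply, Algebra.smul_def]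
    noncomm_ring

noncomputable def eulerOp (n : ℕ) :
    ExteriorAlgebra ℝ (Fin n → ℝ) →ₗ[ℝ] ExteriorAlgebra ℝ (Fin n → ℝ) :=
  ∑ i : Fin n, (LinearMap.mulLeft ℝ (ExteriorAlgebra.ι ℝ (Pi.single i (1:ℝ)))) ∘ₗ
    (CliffordAlgebra.contractLeft (Q := (0 : QuadraticForm ℝ (Fin n → ℝ)))
      (LinearMap.proj i : (Fin n → ℝ) →ₗ[ℝ] ℝ))

theorem eulerOp_apply (n : ℕ) (a : ExteriorAlgebra ℝ (Fin n → ℝ)) :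
    eulerOp n a = ∑ i : Fin n, ExteriorAlgebra.ι ℝ (Pi.single i (1:ℝ)) *
      (CliffordAlgebra.contractLeft (Q := (0 : QuadraticForm ℝ (Fin n → ℝ)))
      (LinearMap.proj i : (Fin n → ℝ) →ₗ[ℝ] ℝ) a) := by
  simp [eulerOp]

theorem eulerOp_ι_mul (n : ℕ) (v : Fin n → ℝ) (a : ExteriorAlgebra ℝ (Fin n → ℝ)) :
    eulerOp n (ExteriorAlgebra.ι ℝ v * a) =
      ExteriorAlgebra.ι ℝ v * a + ExteriorAlgebra.ι ℝ v * eulerOp n a := by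
  have hv : ExteriorAlgebra.ι ℝ v = ∑ i, v i • ExteriorAlgebra.ι ℝ (Pi.single i (1:ℝ)) := by
    simp only [← map_smul, ← map_sum]
    congr 1
    exact pi_eq_sum_univ' v |>.trans (by
      refine Finset.sum_congr rfl fun i _ => ?_
      congr 1)
  rw [eulerOp_apply, eulerOp_apply]
  have key : ∀ i : Fin n, ExteriorAlgebra.ι ℝ (Pi.single i (1:ℝ)) *
      (CliffordAlgebra.contractLeft (Q := (0 : QuadraticForm ℝ (Fin n → ℝ)))
      (LinearMap.proj i : (Fin n → ℝ) →ₗ[ℝ] ℝ) (ExteriorAlgebra.ι ℝ v * a)) =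
      (v i • ExteriorAlgebra.ι ℝ (Pi.single i (1:ℝ))) * a + ExteriorAlgebra.ι ℝ v *
        (ExteriorAlgebra.ι ℝ (Pi.single i (1:ℝ)) *
      (CliffordAlgebra.contractLeft (Q := (0 : QuadraticForm ℝ (Fin n → ℝ)))
      (LinearMap.proj i : (Fin n → ℝ) →ₗ[ℝ] ℝ) a)) := by
    intro i
    have h1 := CliffordAlgebra.contractLeft_ι_mul (Q := (0 : QuadraticForm ℝ (Fin n → ℝ)))
      (d := (LinearMap.proj i : (Fin n → ℝ) →ₗ[ℝ] ℝ)) v a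
    have h2 := ExteriorAlgebra.ι_add_mul_swap (R := ℝ) (Pi.single i (1:ℝ)) v
    have h3 := eq_neg_of_add_eq_zero_left h2
    erw [h1]
    rw [mul_sub]
    erw [← mul_assoc, ← mul_assoc]
    erw [h3]
    simp
  rw [Finset.sum_congr rfl fun i _ => key i, Finset.sum_add_distrib, ← Finset.sum_mul, ← hv,
    Finset.mul_sum]

theorem eulerOp_of_mem (n k : ℕ) (a : ExteriorAlgebra ℝ (Fin n → ℝ))
    (ha : a ∈ ⋀[ℝ]^k (Fin n → ℝ)) : eulerOp n a = (k : ℝ) • a := by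
  change a ∈ (LinearMap.range (ExteriorAlgebra.ι ℝ)) ^ k at ha
  induction ha using Submodule.pow_induction_on_left' with
  | algebraMap r =>
    rw [eulerOp_apply]
    have : ∀ i : Fin n, (CliffordAlgebra.contractLeft (Q := (0 : QuadraticForm ℝ (Fin n → ℝ)))
      (LinearMap.proj i : (Fin n → ℝ) →ₗ[ℝ] ℝ)
        (algebraMap ℝ (ExteriorAlgebra ℝ (Fin n → ℝ)) r)) = 0 :=
      fun i => CliffordAlgebra.contractLeft_algebraMap _ _ _
    simp [this]
  | add x y i hx hy h1 h2 => rw [map_add, h1, h2, smul_add]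
  | mem_mul m hm i x hx ih =>
    obtain ⟨v, rfl⟩ := hm
    rw [eulerOp_ι_mul, ih]
    simp only [mul_smul_comm, Nat.cast_succ, add_smul, one_smul]
    abel

theorem ext_scalar (n : ℕ) (a : ExteriorAlgebra ℝ (Fin n → ℝ)) (ha : eulerOp n a = 0) :
    ∃ r : ℝ, a = algebraMap ℝ _ r := by
  classical
  have h : ∀ (b : ExteriorAlgebra ℝ (Fin n → ℝ)) (k : ℕ),
      GradedRing.proj (fun i : ℕ => ⋀[ℝ]^i (Fin n → ℝ)) k (eulerOp n b) =
      (k : ℝ) • GradedRing.proj (fun i : ℕ => ⋀[ℝ]^i (Fin n → ℝ)) k b := by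
    intro b k
    induction b using DirectSum.Decomposition.inductionOn
      (fun i : ℕ => ⋀[ℝ]^i (Fin n → ℝ)) with
    | zero => simp
    | @homogeneous i m =>
      rw [eulerOp_of_mem n i m m.2]
      simp only [GradedRing.proj_apply, DirectSum.decompose_smul, DirectSum.decompose_coe]
      by_cases hik : i = k
      · subst hik; simp [DirectSum.smul_apply]
      · simp [DirectSum.smul_apply, DirectSum.of_eq_of_ne _ _ _ (Ne.symm hik)]
    | add x y hx hy => rw [map_add, map_add, map_add, hx, hy, smul_add]
  have h0 : ∀ k : ℕ, k ≠ 0 → (DirectSum.decompose (fun i : ℕ => ⋀[ℝ]^i (Fin n → ℝ)) a k :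
      ExteriorAlgebra ℝ (Fin n → ℝ)) = 0 := by
    intro k hk
    have := h a k
    rw [ha, map_zero] at this
    simpa [GradedRing.proj_apply, hk] using this.symm
  have hs := DirectSum.sum_support_decompose (fun i : ℕ => ⋀[ℝ]^i (Fin n → ℝ)) a
  have hm : a ∈ ⋀[ℝ]^0 (Fin n → ℝ) := by
    rw [← hs]
    refine Submodule.sum_mem _ fun k _ => ?_
    by_cases hk : k = 0
    · subst hk; exact SetLike.coe_mem _
    · rw [h0 k hk]; exact zero_mem _
  change a ∈ (LinearMap.range (ExteriorAlgebra.ι ℝ)) ^ 0 at hm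
  rw [pow_zero, Submodule.mem_one] at hm
  obtain ⟨r, hr⟩ := hm
  exact ⟨r, hr.symm⟩

theorem cl_scalar (n : ℕ) (Q : QuadraticForm ℝ (Fin n → ℝ)) (a : CliffordAlgebra Q)
    (ha : ∀ i : Fin n, contractLeft (LinearMap.proj i : (Fin n → ℝ) →ₗ[ℝ] ℝ) a = 0) :
    ∃ r : ℝ, a = algebraMap ℝ _ r := by
  have h := changeForm.associated_neg_proof (Q := Q)
  obtain ⟨r, hr⟩ := ext_scalar n (changeForm h a) (by
    rw [eulerOp_apply]
    refine Finset.sum_eq_zero fun i _ => ?_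
    have h2 := changeForm_contractLeft h (LinearMap.proj i : (Fin n → ℝ) →ₗ[ℝ] ℝ) a
    rw [ha i, map_zero] at h2
    erw [← h2]
    exact mul_zero _)
  refine ⟨r, (changeFormEquiv h).injective ?_⟩
  exact hr.trans (changeForm_algebraMap h r).symm

theorem twisted_center (p q : ℕ) (a : Cl p q)
    (ha : ∀ x, ι (Qpq p q) x * a = involute a * ι (Qpq p q) x) :
    ∃ r : ℝ, a = algebraMap ℝ _ r := by
  refine cl_scalar _ _ a fun i => ?_
  have h := aux_contract (Qpq p q) (Pi.single i 1) a
  rw [ha, sub_self] at h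
  have hp : QuadraticMap.polarBilin (Qpq p q) (Pi.single i 1) =
      (2 * (if (i : ℕ) < p then (1 : ℝ) else -1)) •
        (LinearMap.proj i : (Fin (p + q) → ℝ) →ₗ[ℝ] ℝ) := by
    ext j
    simp only [QuadraticMap.polarBilin_apply_apply, QuadraticMap.polar, Qpq,
      QuadraticMap.weightedSumSquares_apply, LinearMap.comp_apply, LinearMap.smul_apply,
      LinearMap.proj_apply, LinearMap.single_apply, ← Finset.sum_sub_distrib, Pi.add_apply,
      smul_eq_mul]
    rw [Finset.sum_eq_single i]
    · simp only [Pi.single_eq_same]; ring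
    · intro b _ hb
      simp [Pi.single_eq_of_ne hb]
    · simp
  rw [hp, map_smul, LinearMap.smul_apply] at h
  refine (smul_eq_zero.mp h.symm).resolve_left ?_
  split_ifs <;> norm_num

theorem normN_scalar (p q : ℕ) (T : Cl p q) (hT : T ∈ lipschitzGrp p q) :
    ∃ lam : ℝ, normN p q T = algebraMap ℝ _ lam := by
  obtain ⟨hu, h⟩ := hT
  refine twisted_center p q _ fun x => ?_
  obtain ⟨y, hy⟩ := h x
  have h1 : involute T * ι (Qpq p q) x = ι (Qpq p q) y * T := by
    rw [← hy, mul_assoc, Ring.inverse_mul_cancel _ hu, mul_one]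
  have h2 := congrArg (reverse (Q := Qpq p q)) h1
  simp only [reverse.map_mul, reverse_ι] at h2
  simp only [normN, map_mul]
  rw [← reverse_involute, involute_involute, mul_assoc, h1, ← mul_assoc, ← mul_assoc, h2]

theorem normN_mul (p q : ℕ) (U V : Cl p q) (hU : U ∈ lipschitzGrp p q) :
    normN p q (U * V) = normN p q U * normN p q V := by
  obtain ⟨r, hr⟩ := normN_scalar p q U hU
  calc normN p q (U * V) = reverse (involute V) * normN p q U * V := by
        simp [normN, reverse.map_mul, mul_assoc]
    _ = _ := by rw [hr, ← Algebra.commutes, mul_assoc]; rfl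

/-- On the Lipschitz group, `N` takes nonzero scalar values and is multiplicative,
with `N(T⁻¹) = N(T)⁻¹`. -/
theorem norm_on_lipschitz (p q : ℕ) :
    (∀ T ∈ lipschitzGrp p q, ∃ lam : ℝ, lam ≠ 0 ∧ normN p q T = lam • (1 : Cl p q)) ∧
    (∀ U ∈ lipschitzGrp p q, ∀ V ∈ lipschitzGrp p q,
      normN p q (U * V) = normN p q U * normN p q V) ∧
    (∀ T ∈ lipschitzGrp p q,
      normN p q (Ring.inverse T) = Ring.inverse (normN p q T)) := by
  have hinv : ∀ T ∈ lipschitzGrp p q, normN p q T * normN p q (Ring.inverse T) = 1 := by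
    intro T hT
    rw [← normN_mul p q _ _ hT, Ring.mul_inverse_cancel _ hT.1]
    simp [normN]
  refine ⟨fun T hT => ?_, fun U hU V _ => normN_mul p q U V hU, fun T hT => ?_⟩
  · obtain ⟨r, hr⟩ := normN_scalar p q T hT
    refine ⟨r, ?_, by rw [hr, Algebra.algebraMap_eq_smul_one]⟩
    rintro rfl
    have := hinv T hT
    rw [hr, map_zero, zero_mul] at this
    exact zero_ne_one this
  · obtain ⟨r, hr⟩ := normN_scalar p q T hT
    have h1 := hinv T hT
    have h2 : normN p q (Ring.inverse T) * normN p q T = 1 := by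
      rw [hr, ← Algebra.commutes, ← hr, h1]
    exact (Ring.inverse_unit (Units.mk _ _ h1 h2)).symm
end

section
/- Let n = p + q = 3 and let U ∈ Cl_{p,q}. Then the element U·Ũ·Û·ĤŨ (the product U · reverse(U) · involute(U) · involute(reverse(U))) is a scalar: there exists d ∈ ℝ (called Det U) with U·reverse(U)·involute(U)·involute(reverse(U)) = d·e. Moreover, U is invertible in Cl_{p,q} if and only if d ≠ 0, and in that case U^{−1} = d^{−1} · reverse(U)·involute(U)·involute(reverse(U)). -/
open CliffordAlgebra

section aux
variable {M : Type*} [AddCommGroup M] [Module ℝ M] {Q : QuadraticForm ℝ M}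

/-- general element -/
noncomputable def lc8 (a b c : CliffordAlgebra Q) (x : Fin 8 → ℝ) : CliffordAlgebra Q :=
  x 0 • 1 + x 1 • a + x 2 • b + x 3 • c + x 4 • (a * b) + x 5 • (a * c) + x 6 • (b * c)
    + x 7 • (a * (b * c))

theorem lc8_all (e f g : M) (hef : QuadraticMap.polar Q e f = 0)
    (heg : QuadraticMap.polar Q e g = 0) (hfg : QuadraticMap.polar Q f g = 0)
    (hs : ∀ v : M, ∃ x y z : ℝ, v = x • e + y • f + z • g) (U : CliffordAlgebra Q) :
    ∃ x, U = lc8 (ι Q e) (ι Q f) (ι Q g) x := by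
  have haa : ι Q e * ι Q e = Q e • 1 := by rw [ι_sq_scalar, Algebra.algebraMap_eq_smul_one]
  have hbb : ι Q f * ι Q f = Q f • 1 := by rw [ι_sq_scalar, Algebra.algebraMap_eq_smul_one]
  have hcc : ι Q g * ι Q g = Q g • 1 := by rw [ι_sq_scalar, Algebra.algebraMap_eq_smul_one]
  have hba : ι Q f * ι Q e = -(ι Q e * ι Q f) := by
    rw [eq_neg_iff_add_eq_zero, add_comm, ι_mul_ι_add_swap, hef, map_zero]
  have hca : ι Q g * ι Q e = -(ι Q e * ι Q g) := by
    rw [eq_neg_iff_add_eq_zero, add_comm, ι_mul_ι_add_swap, heg, map_zero]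
  have hcb : ι Q g * ι Q f = -(ι Q f * ι Q g) := by
    rw [eq_neg_iff_add_eq_zero, add_comm, ι_mul_ι_add_swap, hfg, map_zero]
  have haa' (t) : ι Q e * (ι Q e * t) = Q e • t := by rw [← mul_assoc, haa]; simp
  have hbb' (t) : ι Q f * (ι Q f * t) = Q f • t := by rw [← mul_assoc, hbb]; simp
  have hcc' (t) : ι Q g * (ι Q g * t) = Q g • t := by rw [← mul_assoc, hcc]; simp
  have hba' (t) : ι Q f * (ι Q e * t) = -(ι Q e * (ι Q f * t)) := by
    rw [← mul_assoc, hba, neg_mul, mul_assoc]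
  have hca' (t) : ι Q g * (ι Q e * t) = -(ι Q e * (ι Q g * t)) := by
    rw [← mul_assoc, hca, neg_mul, mul_assoc]
  have hcb' (t) : ι Q g * (ι Q f * t) = -(ι Q f * (ι Q g * t)) := by
    rw [← mul_assoc, hcb, neg_mul, mul_assoc]
  induction U using CliffordAlgebra.left_induction with
  | algebraMap r =>
    exact ⟨![r,0,0,0,0,0,0,0], by simp [lc8, Algebra.algebraMap_eq_smul_one]⟩
  | add x y hx hy =>
    obtain ⟨x, rfl⟩ := hx
    obtain ⟨y, rfl⟩ := hy
    refine ⟨x + y, ?_⟩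
    simp only [lc8, Pi.add_apply]
    module
  | ι_mul y v hy =>
    obtain ⟨x, rfl⟩ := hy
    obtain ⟨r, s, t, rfl⟩ := hs v
    refine ⟨r • ![x 1 * Q e, x 0, x 4 * Q e, x 5 * Q e, x 2, x 3, x 7 * Q e, x 6]
      + s • ![x 2 * Q f, -x 4 * Q f, x 0, x 6 * Q f, -x 1, -x 7 * Q f, x 3, -x 5]
      + t • ![x 3 * Q g, -x 5 * Q g, -x 6 * Q g, x 0, x 7 * Q g, -x 1, -x 2, x 4], ?_⟩
    simp only [lc8, map_add, map_smul, add_mul, mul_add, smul_mul_assoc, mul_smul_comm, mul_one,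
      haa, hbb, hcc, hba, hca, hcb, haa', hbb', hba', hca', hcb', mul_neg, neg_neg,
      Pi.add_apply, Pi.smul_apply, smul_eq_mul, Matrix.cons_val]
    module

theorem lc8_rev (e f g : M) (hef : QuadraticMap.polar Q e f = 0)
    (heg : QuadraticMap.polar Q e g = 0) (hfg : QuadraticMap.polar Q f g = 0) (x : Fin 8 → ℝ) :
    ∃ (m : ℝ) (v : M), lc8 (ι Q e) (ι Q f) (ι Q g) x + reverse (lc8 (ι Q e) (ι Q f) (ι Q g) x)
      = (2 : ℝ) • (m • 1 + ι Q v) := by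
  have hba : ι Q f * ι Q e = -(ι Q e * ι Q f) := by
    rw [eq_neg_iff_add_eq_zero, add_comm, ι_mul_ι_add_swap, hef, map_zero]
  have hca : ι Q g * ι Q e = -(ι Q e * ι Q g) := by
    rw [eq_neg_iff_add_eq_zero, add_comm, ι_mul_ι_add_swap, heg, map_zero]
  have hcb : ι Q g * ι Q f = -(ι Q f * ι Q g) := by
    rw [eq_neg_iff_add_eq_zero, add_comm, ι_mul_ι_add_swap, hfg, map_zero]
  have hcba : ι Q g * ι Q f * ι Q e = -(ι Q e * (ι Q f * ι Q g)) := by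
    rw [hcb, neg_mul, mul_assoc, hca, mul_neg, neg_neg, ← mul_assoc, hba, neg_mul, mul_assoc]
  have hcba' : ι Q f * ι Q g * ι Q e = ι Q e * (ι Q f * ι Q g) := by
    rw [hcb, neg_mul, neg_inj] at hcba
    exact hcba
  refine ⟨x 0, x 1 • e + x 2 • f + x 3 • g, ?_⟩
  simp only [lc8, map_add, map_smul, reverse.map_mul, reverse_ι, reverse.map_one, hcba', hba, hca,
    hcb, neg_mul, smul_neg]
  module

theorem det_aux (e f g : M) (hef : QuadraticMap.polar Q e f = 0)
    (heg : QuadraticMap.polar Q e g = 0) (hfg : QuadraticMap.polar Q f g = 0)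
    (hs : ∀ v : M, ∃ x y z : ℝ, v = x • e + y • f + z • g) (U : CliffordAlgebra Q) :
    ∃ d : ℝ,
      U * reverse U * involute U * involute (reverse U) = d • (1 : CliffordAlgebra Q) ∧
      (IsUnit U ↔ d ≠ 0) ∧
      (d ≠ 0 →
        U * (d⁻¹ • (reverse U * involute U * involute (reverse U))) = 1 ∧
        (d⁻¹ • (reverse U * involute U * involute (reverse U))) * U = 1) := by
  have hfin : Module.Finite ℝ (CliffordAlgebra Q) := by
    let b : Fin 8 → CliffordAlgebra Q := ![1, ι Q e, ι Q f, ι Q g, ι Q e * ι Q f, ι Q e * ι Q g,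
      ι Q f * ι Q g, ι Q e * (ι Q f * ι Q g)]
    refine Module.Finite.of_surjective (Fintype.linearCombination ℝ b) fun y => ?_
    obtain ⟨x, rfl⟩ := lc8_all e f g hef heg hfg hs y
    exact ⟨x, by simp [Fintype.linearCombination_apply, Fin.sum_univ_eight, lc8, b]⟩
  obtain ⟨x, hx⟩ := lc8_all e f g hef heg hfg hs (U * reverse U)
  obtain ⟨m, v, hv⟩ := lc8_rev e f g hef heg hfg x
  rw [← hx, reverse.map_mul, reverse_reverse, ← two_smul ℝ (U * reverse U)] at hv
  have hN : U * reverse U = m • 1 + ι Q v := smul_right_injective _ (two_ne_zero' ℝ) hv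
  have hd : U * reverse U * involute U * involute (reverse U)
      = (m ^ 2 - Q v) • (1 : CliffordAlgebra Q) := by
    rw [mul_assoc, ← map_mul, hN]
    simp only [map_add, map_smul, map_one, involute_ι, mul_add, add_mul, mul_neg, ι_sq_scalar,
      Algebra.algebraMap_eq_smul_one, smul_mul_assoc, mul_smul_comm, mul_one, one_mul]
    module
  have key : m ^ 2 - Q v ≠ 0 →
      U * ((m ^ 2 - Q v)⁻¹ • (reverse U * involute U * involute (reverse U))) = 1 ∧
      ((m ^ 2 - Q v)⁻¹ • (reverse U * involute U * involute (reverse U))) * U = 1 := by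
    intro h0
    have h1 : U * ((m ^ 2 - Q v)⁻¹ • (reverse U * involute U * involute (reverse U))) = 1 := by
      rw [mul_smul_comm, ← mul_assoc, ← mul_assoc, hd, smul_smul, inv_mul_cancel₀ h0, one_smul]
    have : IsNoetherianRing (CliffordAlgebra Q) := IsNoetherianRing.of_finite ℝ _
    exact ⟨h1, mul_eq_one_symm h1⟩
  refine ⟨m ^ 2 - Q v, hd, ⟨fun hU h0 => ?_, fun h0 => ?_⟩, key⟩
  · have hr : IsUnit (reverse U) := by
      obtain ⟨⟨u, w, h1, h2⟩, rfl⟩ := hU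
      refine ⟨⟨reverse u, reverse w, ?_, ?_⟩, rfl⟩
      · rw [← reverse.map_mul, h2, reverse.map_one]
      · rw [← reverse.map_mul, h1, reverse.map_one]
    have := ((hU.mul hr).mul (hU.map involute)).mul (hr.map involute)
    rw [hd, h0, zero_smul] at this
    exact not_isUnit_zero this
  · exact ⟨⟨U, _, (key h0).1, (key h0).2⟩, rfl⟩

theorem det_aux3 (n : ℕ) (h : n = 3) (w : Fin n → ℝ)
    (U : CliffordAlgebra (QuadraticMap.weightedSumSquares ℝ w)) :
    ∃ d : ℝ,
      U * reverse U * involute U * involute (reverse U) = d • (1 : CliffordAlgebra _) ∧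
      (IsUnit U ↔ d ≠ 0) ∧
      (d ≠ 0 →
        U * (d⁻¹ • (reverse U * involute U * involute (reverse U))) = 1 ∧
        (d⁻¹ • (reverse U * involute U * involute (reverse U))) * U = 1) := by
  subst h
  refine det_aux ![1,0,0] ![0,1,0] ![0,0,1] ?_ ?_ ?_ ?_ U
  · simp [QuadraticMap.polar, QuadraticMap.weightedSumSquares_apply, Fin.sum_univ_three]
  · simp [QuadraticMap.polar, QuadraticMap.weightedSumSquares_apply, Fin.sum_univ_three]
  · simp [QuadraticMap.polar, QuadraticMap.weightedSumSquares_apply, Fin.sum_univ_three]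
  · intro v
    refine ⟨v 0, v 1, v 2, ?_⟩
    ext i
    fin_cases i <;> simp

end aux

/-- For `n = p + q = 3`, the element `U·Ũ·Û·involute(Ũ)` is a scalar `d • e`
(the determinant of `U`); `U` is invertible iff `d ≠ 0`, in which case
`U⁻¹ = d⁻¹ • Ũ·Û·involute(Ũ)`. -/
theorem det_and_inverse_n3 (p q : ℕ) (h : p + q = 3) (U : Cl p q) :
    ∃ d : ℝ,
      U * reverse U * involute U * involute (reverse U) = d • (1 : Cl p q) ∧
      (IsUnit U ↔ d ≠ 0) ∧
      (d ≠ 0 →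
        U * (d⁻¹ • (reverse U * involute U * involute (reverse U))) = 1 ∧
        (d⁻¹ • (reverse U * involute U * involute (reverse U))) * U = 1) := by
  exact det_aux3 (p + q) h _ U
end

section
/- Let n = p + q ≤ 5. Suppose T ∈ Cl_{p,q} is homogeneous with respect to the ℤ/2-grading (T lies in the even part or in the odd part) and satisfies reverse(T)·T = e or reverse(T)·T = −e. Then T is invertible (with T^{−1} = ±reverse(T)) and T·ι(x)·T^{−1} ∈ ι(ℝⁿ) for every x ∈ ℝⁿ; that is, for n ≤ 5 the defining condition 'T x T^{−1} ∈ Cl¹_{p,q} for all x ∈ Cl¹_{p,q}' of the spin groups holds automatically, so Pin(p,q) = {T ∈ Cl^{(0)}_{p,q} ∪ Cl^{(1)}_{p,q} : reverse(T)·T = ±e}. -/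
open CliffordAlgebra

namespace SpinAux

variable {p q : ℕ}

lemma gen_sq (i : Fin (p+q)) : gen p q i * gen p q i = 1 ∨ gen p q i * gen p q i = -1 := by
  unfold gen
  rw [ι_sq_scalar]
  have : Qpq p q (Pi.single i 1) = if (i:ℕ) < p then (1:ℝ) else -1 := by
    unfold Qpq
    rw [QuadraticMap.weightedSumSquares_apply]
    rw [Finset.sum_eq_single i]
    · simp
    · intro b _ hb
      simp [Pi.single_apply, hb]
    · simp
  rw [this]
  split_ifs
  · left; simp
  · right; simp

lemma gen_anti {i j : Fin (p+q)} (hij : i ≠ j) : gen p q i * gen p q j = - (gen p q j * gen p q i) := by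
  unfold gen
  apply ι_mul_ι_comm_of_isOrtho
  unfold Qpq
  rw [QuadraticMap.isOrtho_def]
  simp only [QuadraticMap.weightedSumSquares_apply]
  rw [← Finset.sum_add_distrib]
  apply Finset.sum_congr rfl
  intro k _
  simp only [Pi.add_apply, Pi.single_apply]
  by_cases h1 : k = i
  · subst h1; simp [hij]
  · simp [h1]

noncomputable def w (l : List (Fin (p+q))) : Cl p q := (l.map (gen p q)).prod

@[simp] lemma w_nil : w ([] : List (Fin (p+q))) = 1 := by simp [w]
@[simp] lemma w_cons (i) (l : List (Fin (p+q))) : w (i :: l) = gen p q i * w l := by simp [w]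
@[simp] lemma w_append (l m : List (Fin (p+q))) : w (l ++ m) = w l * w m := by simp [w]

lemma gen_w (i) (l : List (Fin (p+q))) :
    gen p q i * w l = ((-1:ℝ)^(l.countP (fun j => j ≠ i))) • (w l * gen p q i) := by
  induction l with
  | nil => simp
  | cons j l ih =>
    by_cases hj : j = i
    · subst hj
      rw [List.countP_cons_of_neg (by simp), w_cons, mul_assoc, ← mul_smul_comm, ← ih]
    · rw [List.countP_cons_of_pos (by simpa using hj), w_cons, ← mul_assoc, gen_anti (Ne.symm hj),
        neg_mul, mul_assoc, ih, pow_succ]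
      simp [mul_assoc]

lemma countP_not_mem {i} {l : List (Fin (p+q))} (h : i ∉ l) : l.countP (fun j => j ≠ i) = l.length := by
  rw [List.countP_eq_length]
  intro a ha
  simp
  rintro rfl
  exact h ha

lemma gen_w_not_mem {i} {l : List (Fin (p+q))} (h : i ∉ l) :
    gen p q i * w l = ((-1:ℝ)^l.length) • (w l * gen p q i) := by
  rw [gen_w, countP_not_mem h]

lemma gen_w_mem {i} {l : List (Fin (p+q))} (hl : l.Nodup) (h : i ∈ l) :
    gen p q i * w l = ((-1:ℝ)^(l.length - 1)) • (w l * gen p q i) := by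
  rw [gen_w]
  congr 2
  obtain ⟨s, t, rfl⟩ := List.append_of_mem h
  have hs : i ∉ s := by
    intro hi; rw [List.nodup_append] at hl; exact hl.2.2 i hi i (by simp) rfl
  have ht : i ∉ t := by
    have := (List.nodup_append.1 hl).2.1
    exact (List.nodup_cons.1 this).1
  rw [List.countP_append, List.countP_cons_of_neg (by simp), countP_not_mem hs, countP_not_mem ht]
  simp

lemma neg_one_pow_or (k : ℕ) : ((-1:ℝ)^k) = 1 ∨ ((-1:ℝ)^k) = -1 := neg_one_pow_eq_or ℝ k

/-- span of nodup words -/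
noncomputable def S (p q : ℕ) : Submodule ℝ (Cl p q) :=
  Submodule.span ℝ (w '' {l : List (Fin (p+q)) | l.Nodup})

lemma w_mem {l : List (Fin (p+q))} (hl : l.Nodup) : w l ∈ S p q :=
  Submodule.subset_span ⟨l, hl, rfl⟩

lemma gen_mul_mem (i : Fin (p+q)) {x : Cl p q} (hx : x ∈ S p q) : gen p q i * x ∈ S p q := by
  unfold S at hx
  induction hx using Submodule.span_induction with
  | zero => simp
  | add x y _ _ h1 h2 => rw [mul_add]; exact add_mem h1 h2
  | smul a x _ h => rw [mul_smul_comm]; exact Submodule.smul_mem _ _ h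
  | mem x hx =>
    obtain ⟨l, hl, rfl⟩ := hx
    by_cases hi : i ∈ l
    · obtain ⟨s, t, rfl⟩ := List.append_of_mem hi
      rw [w_append, w_cons, ← mul_assoc, gen_w, smul_mul_assoc]
      apply Submodule.smul_mem
      have hst : (s ++ t).Nodup := hl.sublist (by simp)
      rw [mul_assoc, ← mul_assoc (gen p q i)]
      rcases gen_sq i with h | h
      · rw [h, one_mul, ← w_append]; exact w_mem hst
      · rw [h, neg_mul, one_mul, mul_neg, ← w_append]; exact neg_mem (w_mem hst)
    · rw [← w_cons]
      exact w_mem (List.nodup_cons.2 ⟨hi, hl⟩)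

lemma iota_eq (x : Fin (p+q) → ℝ) : ι (Qpq p q) x = ∑ i, x i • gen p q i := by
  conv_lhs => rw [pi_eq_sum_univ' x]
  simp only [map_sum, map_smul, gen]

lemma mem_S (x : Cl p q) : x ∈ S p q := by
  induction x using CliffordAlgebra.left_induction with
  | algebraMap r =>
    rw [Algebra.algebraMap_eq_smul_one, ← w_nil]
    exact Submodule.smul_mem _ _ (w_mem (by simp))
  | add x y h1 h2 => exact add_mem h1 h2
  | ι_mul x m h =>
    rw [iota_eq, Finset.sum_mul]
    apply Submodule.sum_mem
    intro i _
    rw [smul_mul_assoc]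
    exact Submodule.smul_mem _ _ (gen_mul_mem i h)

lemma finite_cl (p q : ℕ) : Module.Finite ℝ (Cl p q) := by
  refine ⟨?_⟩
  have : (⊤ : Submodule ℝ (Cl p q)) = S p q := by
    symm; rw [eq_top_iff]; intro x _; exact mem_S x
  rw [this]
  apply Submodule.fg_span
  apply Set.Finite.image
  apply (List.finite_length_le (Fin (p+q)) (p+q)).subset
  intro l hl
  have : l.length ≤ p + q := by simpa using List.Nodup.length_le_card hl
  exact this

lemma reverse_w {l : List (Fin (p+q))} (hl : l.Nodup) :
    reverse (w l) = ((-1:ℝ)^(l.length * (l.length - 1) / 2)) • w l := by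
  induction l with
  | nil => simp
  | cons i l ih =>
    obtain ⟨h1, h2⟩ := List.nodup_cons.1 hl
    have hg : reverse (gen p q i) = gen p q i := by simp [gen]
    rw [w_cons, reverse.map_mul, hg, ih h2, gen_w_not_mem h1, smul_mul_assoc, smul_smul, ← pow_add]
    congr 1
    rw [List.length_cons, Nat.triangle_succ, add_assoc, pow_add, ← two_mul]
    simp

lemma involute_w (l : List (Fin (p+q))) :
    involute (w l) = ((-1:ℝ)^l.length) • w l := by
  induction l with
  | nil => simp
  | cons i l ih =>
    have hg : involute (gen p q i) = - gen p q i := by simp [gen]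
    rw [w_cons, map_mul, hg, ih, List.length_cons, pow_succ]
    simp

lemma reverse_mul_w (l : List (Fin (p+q))) :
    reverse (w l) * w l = 1 ∨ reverse (w l) * w l = -1 := by
  induction l with
  | nil => simp
  | cons i l ih =>
    have hg : reverse (gen p q i) = gen p q i := by simp [gen]
    rw [w_cons, reverse.map_mul, hg, mul_assoc, ← mul_assoc (gen p q i)]
    rcases gen_sq i with h | h <;> rw [h] <;> rcases ih with h | h <;> simp [h]

lemma w_perm {l m : List (Fin (p+q))} (h : l.Perm m) (hl : l.Nodup) : w l = w m ∨ w l = - w m := by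
  induction h with
  | nil => simp
  | cons a h ih => rcases ih (List.nodup_cons.1 hl).2 with h | h <;> simp [h]
  | swap a b l =>
    right
    have : b ≠ a := by rintro rfl; simp at hl
    rw [w_cons, w_cons, w_cons, w_cons, ← mul_assoc, gen_anti this]
    simp [mul_assoc]
  | trans h1 h2 i1 i2 =>
    have := i1 hl
    have := i2 (h1.nodup_iff.1 hl)
    rcases i1 hl with h | h <;> rcases i2 (h1.nodup_iff.1 hl) with h' | h' <;> simp [h, h']

noncomputable def om (p q : ℕ) : Cl p q := w (List.finRange (p+q))

noncomputable def R (p q : ℕ) : Submodule ℝ (Cl p q) :=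
  LinearMap.range (ι (Qpq p q)) ⊔ (if p + q = 5 then Submodule.span ℝ {om p q} else ⊥)

noncomputable def P (p q : ℕ) : Cl p q →ₗ[ℝ] Cl p q :=
  (LinearMap.id - involute.toLinearMap) ∘ₗ (LinearMap.id + reverse)

lemma P_apply (x : Cl p q) : P p q x = (x + reverse x) - involute (x + reverse x) := by
  simp [P]

lemma P_w (hn : p + q ≤ 5) {l : List (Fin (p+q))} (hl : l.Nodup) : P p q (w l) ∈ R p q := by
  have hlen : l.length ≤ p + q := by simpa using hl.length_le_card
  rw [P_apply, reverse_w hl, map_add, map_smul, involute_w]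
  have h5 : l.length ≤ 5 := hlen.trans hn
  by_cases h1 : l.length = 1
  · obtain ⟨i, rfl⟩ := List.length_eq_one_iff.1 h1
    have : w [i] ∈ R p q := by
      apply Submodule.mem_sup_left
      exact ⟨Pi.single i 1, by simp [gen]⟩
    exact sub_mem (add_mem this (Submodule.smul_mem _ _ this))
      (add_mem (Submodule.smul_mem _ _ this) (Submodule.smul_mem _ _ (Submodule.smul_mem _ _ this)))
  by_cases h1 : l.length = 5
  · have : w l ∈ R p q := by
      apply Submodule.mem_sup_right
      have hpq : p + q = 5 := by omega
      rw [if_pos hpq]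
      have hp : l.Perm (List.finRange (p+q)) := by
        apply List.Subperm.perm_of_length_le
        · exact List.subperm_of_subset hl (fun a _ => List.mem_finRange a)
        · simp; omega
      rcases w_perm hp hl with h | h
      · rw [h]; exact Submodule.mem_span_singleton_self _
      · rw [h]; exact neg_mem (Submodule.mem_span_singleton_self _)
    exact sub_mem (add_mem this (Submodule.smul_mem _ _ this))
      (add_mem (Submodule.smul_mem _ _ this) (Submodule.smul_mem _ _ (Submodule.smul_mem _ _ this)))
  have : l.length = 0 ∨ l.length = 2 ∨ l.length = 3 ∨ l.length = 4 := by omega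
  convert (R p q).zero_mem
  rcases this with h | h | h | h <;> rw [h] <;> norm_num

lemma P_mem (hn : p + q ≤ 5) (x : Cl p q) : P p q x ∈ R p q := by
  have hx := mem_S x
  unfold S at hx
  induction hx using Submodule.span_induction with
  | zero => simp
  | add x y _ _ h1 h2 => rw [map_add]; exact add_mem h1 h2
  | smul a x _ h => rw [map_smul]; exact Submodule.smul_mem _ _ h
  | mem x hx =>
    obtain ⟨l, hl, rfl⟩ := hx
    exact P_w hn hl

lemma mem_R (hn : p + q ≤ 5) {y : Cl p q} (h1 : reverse y = y) (h2 : involute y = -y) :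
    y ∈ R p q := by
  have := P_mem hn y
  rw [P_apply, h1, map_add, h2] at this
  have h4 : y = (1/4:ℝ) • (y + y - (-y + -y)) := by
    module
  rw [h4]
  exact Submodule.smul_mem _ _ this

lemma om_comm (hn : p + q = 5) (x : Cl p q) : x * om p q = om p q * x := by
  have hg : ∀ i, gen p q i * om p q = om p q * gen p q i := by
    intro i
    unfold om
    rw [gen_w_mem (List.nodup_finRange _) (List.mem_finRange i), List.length_finRange]
    have : (-1:ℝ)^(p+q-1) = 1 := by rw [hn]; norm_num
    rw [this, one_smul]
  induction x using CliffordAlgebra.left_induction with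
  | algebraMap r => exact Algebra.commutes _ _
  | add x y h1 h2 => rw [add_mul, mul_add, h1, h2]
  | ι_mul x m h =>
    have : ι (Qpq p q) m * om p q = om p q * ι (Qpq p q) m := by
      rw [iota_eq, Finset.sum_mul, Finset.mul_sum]
      simp [hg]
    rw [mul_assoc, h, ← mul_assoc, this, mul_assoc]

lemma om_sq (hn : p + q = 5) : om p q * om p q = 1 ∨ om p q * om p q = -1 := by
  have h := reverse_mul_w (List.finRange (p+q))
  rw [reverse_w (List.nodup_finRange _), List.length_finRange] at h
  have e : (-1:ℝ)^((p+q)*(p+q-1)/2) = 1 := by rw [hn]; norm_num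
  rw [e, one_smul] at h
  exact h

lemma main (hn : p + q ≤ 5) (T U : Cl p q) (hTU : T * U = 1) (hUT : U * T = 1)
    (x : Fin (p+q) → ℝ)
    (h1 : reverse (T * ι (Qpq p q) x * U) = T * ι (Qpq p q) x * U)
    (h2 : involute (T * ι (Qpq p q) x * U) = -(T * ι (Qpq p q) x * U)) :
    T * ι (Qpq p q) x * U ∈ LinearMap.range (ι (Qpq p q)) := by
  have hR := mem_R hn h1 h2
  set y := T * ι (Qpq p q) x * U with hy
  obtain ⟨v', ⟨v, rfl⟩, z, hz, hvz⟩ := Submodule.mem_sup.1 hR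
  split_ifs at hz with h5
  swap
  · rw [← hvz, (Submodule.mem_bot ℝ).1 hz, add_zero]; exact ⟨v, rfl⟩
  obtain ⟨c, rfl⟩ := Submodule.mem_span_singleton.1 hz
  by_cases hc : c = 0
  · rw [← hvz, hc, zero_smul, add_zero]; exact ⟨v, rfl⟩
  have hcm := om_comm h5
  have hyy : y * y = algebraMap ℝ _ (Qpq p q x) := by
    calc y * y = T * ι (Qpq p q) x * (U * T) * ι (Qpq p q) x * U := by
            rw [hy]; simp only [mul_assoc]
      _ = T * (ι (Qpq p q) x * ι (Qpq p q) x) * U := by rw [hUT, mul_one]; simp only [mul_assoc]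
      _ = _ := by rw [ι_sq_scalar, ← Algebra.commutes, mul_assoc, hTU, mul_one]
  -- v * om is a scalar
  obtain ⟨d, hd⟩ : ∃ d : ℝ, ι (Qpq p q) v = d • om p q := by
    obtain ⟨s, hs2, hs⟩ : ∃ s : ℝ, s * s = 1 ∧ om p q * om p q = s • 1 := by
      rcases om_sq h5 with h | h
      · exact ⟨1, by simp, by simp [h]⟩
      · exact ⟨-1, by simp, by simp [h]⟩
    have e : y * y = (Qpq p q v) • (1 : Cl p q) + (2 * c) • (ι (Qpq p q) v * om p q)
        + (c * c * s) • (1 : Cl p q) := by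
      rw [← hvz, add_mul, mul_add, mul_add, ι_sq_scalar, Algebra.algebraMap_eq_smul_one]
      simp only [smul_mul_assoc, mul_smul_comm, hs, ← hcm]
      module
    rw [hyy, Algebra.algebraMap_eq_smul_one] at e
    have e2 : ι (Qpq p q) v * om p q = ((2*c)⁻¹ * (Qpq p q x - Qpq p q v - c * c * s)) • (1 : Cl p q) := by
      have : (2 * c) • (ι (Qpq p q) v * om p q) = (Qpq p q x - Qpq p q v - c * c * s) • (1 : Cl p q) := by
        rw [sub_smul, sub_smul, e]; abel
      rw [mul_smul, ← this, smul_smul, inv_mul_cancel₀ (by simpa using hc), one_smul]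
    refine ⟨s * ((2*c)⁻¹ * (Qpq p q x - Qpq p q v - c * c * s)), ?_⟩
    calc ι (Qpq p q) v = s • (ι (Qpq p q) v * om p q * om p q) := by
          rw [mul_assoc, hs, mul_smul_comm, smul_smul, hs2]; simp
      _ = _ := by rw [e2, smul_mul_assoc, one_mul, smul_smul]
  have hyom : y = (d + c) • om p q := by rw [← hvz, hd, add_smul]
  have hx : ι (Qpq p q) x = y := by
    calc ι (Qpq p q) x = U * T * ι (Qpq p q) x * (U * T) := by rw [hUT]; simp
      _ = U * y * T := by rw [hy]; simp only [mul_assoc]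
      _ = y := by
        rw [hyom, mul_smul_comm, hcm, smul_mul_assoc, mul_assoc, hUT, mul_one]
  exact ⟨x, hx⟩

end SpinAux

/-- For `n = p + q ≤ 5`: if `T` is homogeneous (even or odd) and
`reverse(T)·T = ±e`, then `T` is invertible with `T⁻¹ = ±reverse(T)`, and
`T·ι(x)·T⁻¹` lies in the grade-1 subspace `ι(ℝⁿ)` for every `x` — i.e. the
defining condition of the spin groups holds automatically for `n ≤ 5`. -/
theorem spin_condition_automatic (p q : ℕ) (h : p + q ≤ 5) (T : Cl p q)
    (hT : T ∈ evenOdd (Qpq p q) 0 ∨ T ∈ evenOdd (Qpq p q) 1)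
    (hN : reverse T * T = 1 ∨ reverse T * T = -1) :
    IsUnit T ∧
    (Ring.inverse T = reverse T ∨ Ring.inverse T = -reverse T) ∧
    ∀ x : Fin (p + q) → ℝ, ∃ y : Fin (p + q) → ℝ,
      T * ι (Qpq p q) x * Ring.inverse T = ι (Qpq p q) y := by
  obtain ⟨e, he, hN'⟩ : ∃ e : ℝ, (e = 1 ∨ e = -1) ∧ reverse T * T = e • 1 := by
    rcases hN with h | h
    · exact ⟨1, by simp, by simp [h]⟩
    · exact ⟨-1, by simp, by simp [h]⟩
  have hee : e * e = 1 := by rcases he with h | h <;> simp [h]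
  have hUT : (e • reverse T) * T = 1 := by
    rw [smul_mul_assoc, hN', smul_smul, hee, one_smul]
  have hTU : T * (e • reverse T) = 1 := by
    have := SpinAux.finite_cl p q
    have : IsNoetherianRing (Cl p q) := isNoetherian_of_tower ℝ inferInstance
    exact mul_eq_one_symm hUT
  have hinv : Ring.inverse T = e • reverse T :=
    Ring.inverse_unit (⟨T, e • reverse T, hTU, hUT⟩ : (Cl p q)ˣ)
  refine ⟨⟨⟨T, e • reverse T, hTU, hUT⟩, rfl⟩, ?_, ?_⟩
  · rw [hinv]
    rcases he with h | h <;> simp [h]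
  · intro x
    rw [hinv]
    obtain ⟨f, hff, hf⟩ : ∃ f : ℝ, f * f = 1 ∧ involute T = f • T := by
      rcases hT with h | h
      · exact ⟨1, by simp, by rw [involute_eq_of_mem_even h, one_smul]⟩
      · exact ⟨-1, by simp, by rw [involute_eq_of_mem_odd h, neg_smul, one_smul]⟩
    have hfr : involute (reverse T) = f • reverse T := by
      rw [← reverse_involute, hf, map_smul]
    obtain ⟨y, hy⟩ := SpinAux.main h T (e • reverse T) hTU hUT x
      (by simp [reverse.map_mul, mul_assoc])
      (by
        rw [map_mul, map_mul, map_smul, hf, hfr, involute_ι]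
        simp only [smul_mul_assoc, mul_smul_comm, mul_neg, neg_mul, smul_neg, smul_smul]
        congr 2
        linear_combination e * hff)
    exact ⟨y, hy.symm⟩
end

section
/- (Double covering of the orthogonal group) Let n = p + q and let Pin(p,q) := {T ∈ Cl_{p,q} : T is invertible, T lies in the even or the odd part of the ℤ/2-grading, involute(T)·ι(x)·T^{−1} ∈ ι(ℝⁿ) for all x ∈ ℝⁿ, and reverse(T)·T = ±e}. Then: (1) (surjectivity) for every linear map f : ℝⁿ → ℝⁿ preserving the quadratic form Q_{p,q} (i.e. f ∈ O(p,q)) there exists T ∈ Pin(p,q) such that involute(T)·ι(x)·T^{−1} = ι(f(x)) for all x ∈ ℝⁿ; (2) (kernel = {±e}) if T ∈ Pin(p,q) satisfies involute(T)·ι(x)·T^{−1} = ι(x) for all x ∈ ℝⁿ, then T = e or T = −e. -/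
open CliffordAlgebra

/-- The group `Pin(p,q)`: invertible homogeneous elements whose twisted conjugation
preserves the grade-1 subspace and with `reverse(T)·T = ±e`. -/
def pinGrp (p q : ℕ) : Set (Cl p q) :=
  {T | IsUnit T ∧
    (T ∈ evenOdd (Qpq p q) 0 ∨ T ∈ evenOdd (Qpq p q) 1) ∧
    (∀ x : Fin (p + q) → ℝ, ∃ y : Fin (p + q) → ℝ,
      involute T * ι (Qpq p q) x * Ring.inverse T = ι (Qpq p q) y) ∧
    (reverse T * T = 1 ∨ reverse T * T = -1)}

section PinAux

variable {V : Type*} [AddCommGroup V] [Module ℝ V] (Q : QuadraticForm ℝ V)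

/-- `T` is a pin element inducing `f`. -/
def PinGood (T : CliffordAlgebra Q) (f : V →ₗ[ℝ] V) : Prop :=
  IsUnit T ∧ (T ∈ evenOdd Q 0 ∨ T ∈ evenOdd Q 1) ∧
    (∀ x, involute T * ι Q x = ι Q (f x) * T) ∧
    (reverse T * T = 1 ∨ reverse T * T = -1)

theorem PinGood.one : PinGood Q 1 LinearMap.id := by
  refine ⟨isUnit_one, Or.inl ?_, ?_, ?_⟩
  · exact SetLike.GradedOne.one_mem
  · intro x; simp
  · left; simp

theorem PinGood.comp {S T : CliffordAlgebra Q} {g f : V →ₗ[ℝ] V}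
    (hS : PinGood Q S g) (hT : PinGood Q T f) : PinGood Q (S * T) (g ∘ₗ f) := by
  obtain ⟨s1, s2, s3, s4⟩ := hS
  obtain ⟨t1, t2, t3, t4⟩ := hT
  refine ⟨s1.mul t1, ?_, ?_, ?_⟩
  · have h11 : (1 : ZMod 2) + 1 = 0 := by decide
    rcases s2 with s2 | s2 <;> rcases t2 with t2 | t2
    · left; simpa using SetLike.mul_mem_graded s2 t2
    · right; simpa using SetLike.mul_mem_graded s2 t2
    · right; simpa using SetLike.mul_mem_graded s2 t2
    · left; simpa [h11] using SetLike.mul_mem_graded s2 t2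
  · intro x
    rw [map_mul, mul_assoc, t3, ← mul_assoc, s3, mul_assoc, LinearMap.comp_apply]
  · have : reverse (S * T) * (S * T) = reverse T * (reverse S * S) * T := by
      rw [reverse.map_mul]; simp only [mul_assoc]
    rw [this]
    rcases s4 with s4 | s4 <;> rcases t4 with t4 | t4 <;> simp [s4, t4]

/-- Reflection. -/
noncomputable def pinRefl (u : V) : V →ₗ[ℝ] V :=
  LinearMap.id - ((Q u)⁻¹ • (QuadraticMap.polarBilin Q u)).smulRight u

theorem pinRefl_apply (u x : V) :
    pinRefl Q u x = x - ((Q u)⁻¹ * QuadraticMap.polar Q u x) • u := by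
  simp [pinRefl]

theorem pinRefl_isom {u : V} (hu : Q u ≠ 0) (x : V) : Q (pinRefl Q u x) = Q x := by
  rw [pinRefl_apply]
  set c := (Q u)⁻¹ * QuadraticMap.polar Q u x with hc
  have h1 : Q (x + (-c) • u) = Q x + Q ((-c) • u) + QuadraticMap.polar Q x ((-c) • u) := by
    simp only [QuadraticMap.polar]; ring
  have h2 : c * Q u = QuadraticMap.polar Q u x := by rw [hc]; field_simp
  rw [sub_eq_add_neg, ← neg_smul, h1, QuadraticMap.map_smul, QuadraticMap.polar_smul_right,
    QuadraticMap.polar_comm, ← h2]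
  simp only [smul_eq_mul]; ring

theorem pinRefl_pinRefl {u : V} (hu : Q u ≠ 0) (x : V) : pinRefl Q u (pinRefl Q u x) = x := by
  have h : QuadraticMap.polar Q u (pinRefl Q u x) = - QuadraticMap.polar Q u x := by
    rw [pinRefl_apply, QuadraticMap.polar_sub_right, QuadraticMap.polar_smul_right,
      QuadraticMap.polar_self]
    simp only [smul_eq_mul, nsmul_eq_mul]
    field_simp; push_cast; ring
  rw [pinRefl_apply Q u (pinRefl Q u x), h, pinRefl_apply]
  module

theorem PinGood.refl {u : V} (hu : Q u ≠ 0) : ∃ T, PinGood Q T (pinRefl Q u) := by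
  have habs : 0 < |Q u| := abs_pos.2 hu
  set c : ℝ := (Real.sqrt |Q u|)⁻¹ with hc
  have hc0 : c ≠ 0 := by rw [hc]; positivity
  have hcc : c * c = |Q u|⁻¹ := by rw [hc, ← mul_inv, Real.mul_self_sqrt habs.le]
  refine ⟨c • ι Q u, ?_, Or.inr ?_, ?_, ?_⟩
  · have hm : (c • ι Q u) * ((c⁻¹ * (Q u)⁻¹) • ι Q u) = 1 := by
      rw [smul_mul_smul_comm, ι_sq_scalar, Algebra.algebraMap_eq_smul_one, smul_smul]
      rw [show c * (c⁻¹ * (Q u)⁻¹) * Q u = 1 by field_simp, one_smul]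
    have hm' : ((c⁻¹ * (Q u)⁻¹) • ι Q u) * (c • ι Q u) = 1 := by
      rw [← hm, smul_mul_smul_comm, smul_mul_smul_comm, mul_comm c]
    exact ⟨⟨_, _, hm, hm'⟩, rfl⟩
  · exact Submodule.smul_mem _ _ (ι_mem_evenOdd_one Q u)
  · intro x
    have h := ι_mul_ι_add_swap (Q := Q) u x
    have h' : ι Q u * ι Q x = algebraMap ℝ _ (QuadraticMap.polar Q u x) - ι Q x * ι Q u :=
      eq_sub_of_add_eq h
    rw [pinRefl_apply, map_smul, involute_ι, map_sub, map_smul, mul_smul_comm, smul_mul_assoc,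
      neg_mul, h', sub_mul, smul_mul_assoc, ι_sq_scalar]
    congr 1
    rw [Algebra.algebraMap_eq_smul_one, Algebra.algebraMap_eq_smul_one, smul_smul]
    rw [show (Q u)⁻¹ * QuadraticMap.polar Q u x * Q u = QuadraticMap.polar Q u x by field_simp]
    abel
  · have : reverse (c • ι Q u) * (c • ι Q u) = algebraMap ℝ _ (|Q u|⁻¹ * Q u) := by
      rw [map_smul, reverse_ι, smul_mul_smul_comm, ι_sq_scalar, hcc, map_mul, Algebra.smul_def]
    rw [this]
    rcases abs_choice (Q u) with h | h
    · left; rw [h, inv_mul_cancel₀ hu, map_one]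
    · right; rw [h, inv_neg, neg_mul, inv_mul_cancel₀ hu, map_neg, map_one]

theorem PinGood.of_refl_comp {u : V} (hu : Q u ≠ 0) {f : V →ₗ[ℝ] V}
    (h : ∃ T, PinGood Q T (pinRefl Q u ∘ₗ f)) : ∃ T, PinGood Q T f := by
  obtain ⟨T, hT⟩ := h
  obtain ⟨S, hS⟩ := PinGood.refl Q hu
  refine ⟨S * T, ?_⟩
  have := PinGood.comp Q hS hT
  convert this using 1
  ext x
  simp [pinRefl_pinRefl Q hu]

theorem pin_twisted_comm (v : V) (T : CliffordAlgebra Q) :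
    ι Q v * T - involute T * ι Q v = contractLeft (QuadraticMap.polarBilin Q v) T := by
  induction T using CliffordAlgebra.left_induction with
  | algebraMap r => simp [contractLeft_algebraMap, Algebra.commutes]
  | add x y hx hy => rw [map_add, map_add, ← hx, ← hy]; noncomm_ring
  | ι_mul x m hx =>
    rw [contractLeft_ι_mul, ← hx, map_mul, involute_ι]
    have h := ι_mul_ι_add_swap (Q := Q) v m
    rw [Algebra.smul_def, QuadraticMap.polarBilin_apply_apply, ← h]
    noncomm_ring

end PinAux

section PinScalar

variable {n : ℕ}

/-- Projection killing the `i`th direction in the exterior algebra. -/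
noncomputable def pinProj (i : Fin n) :
    CliffordAlgebra (0 : QuadraticForm ℝ (Fin n → ℝ)) →ₗ[ℝ]
      CliffordAlgebra (0 : QuadraticForm ℝ (Fin n → ℝ)) :=
  LinearMap.id - LinearMap.mulLeft ℝ (ι 0 (Pi.single i 1)) ∘ₗ contractLeft (LinearMap.proj i)

theorem pinProj_apply (i : Fin n) (x) : pinProj i x =
    x - ι 0 (Pi.single i 1) * contractLeft (LinearMap.proj i) x := by
  simp [pinProj]

theorem pinProj_ι_self (i : Fin n) (x) : pinProj i (ι 0 (Pi.single i 1) * x) = 0 := by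
  rw [pinProj_apply, contractLeft_ι_mul, mul_sub, ← mul_assoc, ι_sq_scalar]
  simp

theorem pinProj_ι_ne {i j : Fin n} (h : i ≠ j) (x) :
    pinProj i (ι 0 (Pi.single j 1) * x) = ι 0 (Pi.single j 1) * pinProj i x := by
  have h1 := ι_mul_ι_add_swap (Q := (0 : QuadraticForm ℝ (Fin n → ℝ)))
    (Pi.single i 1) (Pi.single j 1)
  have h2 : ι (0 : QuadraticForm ℝ (Fin n → ℝ)) (Pi.single i 1) * ι 0 (Pi.single j 1)
      = - (ι 0 (Pi.single j 1) * ι 0 (Pi.single i 1)) := by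
    rw [eq_neg_iff_add_eq_zero, h1]; simp [QuadraticMap.polar]
  rw [pinProj_apply, pinProj_apply, contractLeft_ι_mul]
  simp only [LinearMap.proj_apply, Pi.single_eq_of_ne h, zero_smul, zero_sub, mul_neg, mul_sub]
  rw [← mul_assoc, h2, neg_mul, mul_assoc, neg_neg]

/-- Composite of projections. -/
noncomputable def pinProjs (l : List (Fin n)) (x : CliffordAlgebra (0 : QuadraticForm ℝ (Fin n → ℝ))) :
    CliffordAlgebra (0 : QuadraticForm ℝ (Fin n → ℝ)) :=
  (l.map pinProj).prod x

theorem pinProjs_cons (i : Fin n) (l : List (Fin n)) (x) :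
    pinProjs (i :: l) x = pinProj i (pinProjs l x) := by
  simp [pinProjs]

theorem pinProjs_ι (l : List (Fin n)) (j : Fin n) (x) :
    (j ∈ l ∧ pinProjs l (ι 0 (Pi.single j 1) * x) = 0) ∨
    (j ∉ l ∧ pinProjs l (ι 0 (Pi.single j 1) * x) = ι 0 (Pi.single j 1) * pinProjs l x) := by
  induction l with
  | nil => right; simp [pinProjs]
  | cons i l ih =>
    rw [pinProjs_cons, pinProjs_cons]
    rcases ih with ⟨h1, h2⟩ | ⟨h1, h2⟩
    · left; exact ⟨List.mem_cons_of_mem _ h1, by rw [h2, map_zero]⟩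
    · rw [h2]
      by_cases hij : i = j
      · subst hij; left; exact ⟨List.mem_cons_self, pinProj_ι_self _ _⟩
      · right
        exact ⟨by simp [h1, Ne.symm hij], pinProj_ι_ne hij _⟩

theorem pinProjs_fix (l : List (Fin n)) (x) (h : ∀ i : Fin n, contractLeft (LinearMap.proj i) x = 0) :
    pinProjs l x = x := by
  induction l with
  | nil => simp [pinProjs]
  | cons i l ih => rw [pinProjs_cons, ih, pinProj_apply, h, mul_zero, sub_zero]

theorem pinProjs_scalar (l : List (Fin n)) (hl : ∀ i, i ∈ l) (x) :
    ∃ c : ℝ, pinProjs l x = algebraMap ℝ _ c := by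
  induction x using CliffordAlgebra.left_induction with
  | algebraMap r => exact ⟨r, pinProjs_fix _ _ fun i => contractLeft_algebraMap _ _ _⟩
  | add x y hx hy =>
    obtain ⟨a, ha⟩ := hx
    obtain ⟨b, hb⟩ := hy
    refine ⟨a + b, ?_⟩
    rw [map_add, ← ha, ← hb]; simp [pinProjs]
  | ι_mul x m hx =>
    refine ⟨0, ?_⟩
    have hm : m = ∑ j, m j • (Pi.single j 1 : Fin n → ℝ) := by
      exact pi_eq_sum_univ' m |>.trans (by simp)
    have key : ∀ j, pinProjs l (ι 0 (Pi.single j 1) * x) = 0 := by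
      intro j
      rcases pinProjs_ι l j x with h | h
      · exact h.2
      · exact absurd (hl j) h.1
    rw [hm, map_sum, Finset.sum_mul]
    simp only [pinProjs] at key ⊢
    rw [map_sum, map_zero]
    refine Finset.sum_eq_zero fun j _ => ?_
    rw [map_smul, smul_mul_assoc, map_smul, key, smul_zero]

theorem pin_scalar_of_contract (Q : QuadraticForm ℝ (Fin n → ℝ)) (T : CliffordAlgebra Q)
    (h : ∀ i : Fin n, contractLeft (LinearMap.proj i) T = 0) :
    ∃ c : ℝ, T = algebraMap ℝ _ c := by
  let E := equivExterior Q
  have hE : ∀ i : Fin n, contractLeft (Q := (0 : QuadraticForm ℝ (Fin n → ℝ)))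
      (LinearMap.proj i) (E T) = 0 := by
    intro i
    have := changeForm_contractLeft (changeForm.associated_neg_proof (Q := Q)) (LinearMap.proj i) T
    rw [h i, map_zero] at this
    exact this.symm
  obtain ⟨c, hc⟩ := pinProjs_scalar (List.finRange n) (List.mem_finRange) (E T)
  rw [pinProjs_fix _ _ hE] at hc
  refine ⟨c, E.injective ?_⟩
  rw [hc]
  exact (changeForm_algebraMap (changeForm.associated_neg_proof (Q := Q)) c).symm

end PinScalar

theorem Qpq_polar_single (p q : ℕ) (i : Fin (p + q)) (x : Fin (p + q) → ℝ) :
    QuadraticMap.polar (Qpq p q) (Pi.single i 1) x =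
      2 * (if (i : ℕ) < p then (1 : ℝ) else -1) * x i := by
  simp only [QuadraticMap.polar, Qpq, QuadraticMap.weightedSumSquares_apply,
    ← Finset.sum_sub_distrib]
  rw [Finset.sum_eq_single i]
  · split_ifs <;> simp <;> ring
  · intro j _ hj; simp [hj]
  · simp

theorem Qpq_single (p q : ℕ) (i : Fin (p + q)) :
    Qpq p q (Pi.single i 1) = if (i : ℕ) < p then (1 : ℝ) else -1 := by
  simp only [Qpq, QuadraticMap.weightedSumSquares_apply]
  rw [Finset.sum_eq_single i]
  · simp
  · intro j _ hj; simp [hj]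
  · simp

theorem Qpq_single_ne (p q : ℕ) (i : Fin (p + q)) : Qpq p q (Pi.single i 1) ≠ 0 := by
  rw [Qpq_single]; split_ifs <;> norm_num

theorem pin_cartan (p q : ℕ) (m : ℕ) : ∀ k : ℕ, k + m = p + q →
    ∀ f : (Fin (p + q) → ℝ) →ₗ[ℝ] (Fin (p + q) → ℝ), (∀ x, Qpq p q (f x) = Qpq p q x) →
    (∀ j : Fin (p + q), (j : ℕ) < k → f (Pi.single j 1) = Pi.single j 1) →
    ∃ T, PinGood (Qpq p q) T f := by
  induction m with
  | zero =>
    intro k hk f _ hfix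
    have : f = LinearMap.id := by
      refine LinearMap.pi_ext' fun j => ?_
      ext1
      simpa using hfix j (by have := j.2; omega)
    rw [this]
    exact ⟨1, PinGood.one _⟩
  | succ m ih =>
    intro k hk f hf hfix
    let i : Fin (p + q) := ⟨k, by omega⟩
    set v : Fin (p + q) → ℝ := Pi.single i 1 with hv
    have hQv : Qpq p q v ≠ 0 := Qpq_single_ne p q i
    have hpol : ∀ x y, QuadraticMap.polar (Qpq p q) (f x) (f y) =
        QuadraticMap.polar (Qpq p q) x y := by
      intro x y; simp only [QuadraticMap.polar, ← map_add, hf]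
    have hvj : ∀ j : Fin (p + q), (j : ℕ) < k →
        QuadraticMap.polar (Qpq p q) v (Pi.single j 1) = 0 := by
      intro j hj
      have : i ≠ j := by intro h; rw [← h] at hj; exact lt_irrefl _ hj
      rw [hv, Qpq_polar_single, Pi.single_eq_of_ne this, mul_zero]
    have hwj : ∀ j : Fin (p + q), (j : ℕ) < k →
        QuadraticMap.polar (Qpq p q) (f v) (Pi.single j 1) = 0 := by
      intro j hj
      rw [← hvj j hj, ← hpol v, hfix j hj]
    have hQw : Qpq p q (f v) = Qpq p q v := hf v
    have hadd : Qpq p q (f v + v) = 2 * Qpq p q v + QuadraticMap.polar (Qpq p q) (f v) v := by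
      simp only [QuadraticMap.polar, hQw]; ring
    have hsub : Qpq p q (f v - v) = 2 * Qpq p q v - QuadraticMap.polar (Qpq p q) (f v) v := by
      have : QuadraticMap.polar (Qpq p q) (f v) (-v) =
        - QuadraticMap.polar (Qpq p q) (f v) v := QuadraticMap.polar_neg_right ..
      rw [QuadraticMap.polar, QuadraticMap.map_neg, ← sub_eq_add_neg, hQw] at this
      linarith
    have hlt : ∀ j : Fin (p + q), (j : ℕ) < k + 1 → (j : ℕ) < k ∨ j = i := by
      intro j hj
      rcases Nat.lt_succ_iff_lt_or_eq.1 hj with h | h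
      · exact Or.inl h
      · exact Or.inr (Fin.ext h)
    by_cases h0 : Qpq p q (f v - v) = 0
    · have h1 : Qpq p q (f v + v) ≠ 0 := by
        intro h
        apply hQv
        linarith
      apply PinGood.of_refl_comp _ h1
      apply PinGood.of_refl_comp _ hQv
      apply ih (k + 1) (by omega)
      · intro x
        simp only [LinearMap.comp_apply]
        rw [pinRefl_isom _ hQv, pinRefl_isom _ h1, hf]
      · intro j hj
        simp only [LinearMap.comp_apply]
        rcases hlt j hj with h | rfl
        · rw [hfix j h, pinRefl_apply _ (f v + v), QuadraticMap.polar_add_left, hvj j h, hwj j h,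
            add_zero, mul_zero, zero_smul, sub_zero, pinRefl_apply, hvj j h, mul_zero, zero_smul,
            sub_zero]
        · have e1 : pinRefl (Qpq p q) (f v + v) (f v) = -v := by
            have : (Qpq p q (f v + v))⁻¹ *
                QuadraticMap.polar (Qpq p q) (f v + v) (f v) = 1 := by
              rw [QuadraticMap.polar_add_left, QuadraticMap.polar_self, hQw,
                QuadraticMap.polar_comm _ v (f v), nsmul_eq_mul, Nat.cast_ofNat, ← hadd,
                inv_mul_cancel₀ h1]
            rw [pinRefl_apply, this]; module
          rw [← hv, e1, map_neg, pinRefl_apply, QuadraticMap.polar_self, nsmul_eq_mul]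
          have : (Qpq p q v)⁻¹ * (((2 : ℕ) : ℝ) * Qpq p q v) = 2 := by
            push_cast; field_simp
          rw [this]; module
    · apply PinGood.of_refl_comp _ h0
      apply ih (k + 1) (by omega)
      · intro x
        simp only [LinearMap.comp_apply]
        rw [pinRefl_isom _ h0, hf]
      · intro j hj
        simp only [LinearMap.comp_apply]
        rcases hlt j hj with h | rfl
        · rw [hfix j h, pinRefl_apply, QuadraticMap.polar_sub_left, hvj j h, hwj j h,
            sub_zero, mul_zero, zero_smul, sub_zero]
        · have : (Qpq p q (f v - v))⁻¹ *
              QuadraticMap.polar (Qpq p q) (f v - v) (f v) = 1 := by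
            rw [QuadraticMap.polar_sub_left, QuadraticMap.polar_self, hQw,
              QuadraticMap.polar_comm _ v (f v), nsmul_eq_mul, Nat.cast_ofNat, ← hsub,
              inv_mul_cancel₀ h0]
          rw [← hv, pinRefl_apply, this]; module


/-- Double covering of the orthogonal group by `Pin(p,q)`: every linear map
preserving `Q_{p,q}` is induced by some `T ∈ Pin(p,q)` via twisted conjugation
(surjectivity), and the kernel of this action is `{±e}`. -/
theorem pin_double_covers_orthogonal (p q : ℕ) :
    (∀ f : (Fin (p + q) → ℝ) →ₗ[ℝ] (Fin (p + q) → ℝ),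
      (∀ x, Qpq p q (f x) = Qpq p q x) →
      ∃ T ∈ pinGrp p q, ∀ x : Fin (p + q) → ℝ,
        involute T * ι (Qpq p q) x * Ring.inverse T = ι (Qpq p q) (f x)) ∧
    (∀ T ∈ pinGrp p q,
      (∀ x : Fin (p + q) → ℝ,
        involute T * ι (Qpq p q) x * Ring.inverse T = ι (Qpq p q) x) →
      T = 1 ∨ T = -1) := by
  constructor
  · intro f hf
    obtain ⟨T, h1, h2, h3, h4⟩ := pin_cartan p q (p + q) 0 (by omega) f hf
      (fun j hj => absurd hj (Nat.not_lt_zero _))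
    have h5 : ∀ x, involute T * ι (Qpq p q) x * Ring.inverse T = ι (Qpq p q) (f x) := by
      intro x
      rw [h3, mul_assoc, Ring.mul_inverse_cancel _ h1, mul_one]
    exact ⟨T, ⟨h1, h2, fun x => ⟨f x, h5 x⟩, h4⟩, h5⟩
  · rintro T ⟨h1, _, _, h4⟩ h
    have hT : ∀ x, ι (Qpq p q) x * T - involute T * ι (Qpq p q) x = 0 := by
      intro x
      nth_rewrite 1 [← h x]
      rw [mul_assoc, Ring.inverse_mul_cancel _ h1, mul_one, sub_self]
    have hc : ∀ i : Fin (p + q), contractLeft (LinearMap.proj i) T = 0 := by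
      intro i
      have e : QuadraticMap.polarBilin (Qpq p q) (Pi.single i 1) =
          (2 * (if (i : ℕ) < p then (1 : ℝ) else -1)) •
            (LinearMap.proj i : (Fin (p + q) → ℝ) →ₗ[ℝ] ℝ) := by
        refine LinearMap.ext fun x => ?_
        rw [QuadraticMap.polarBilin_apply_apply, Qpq_polar_single]
        rfl
      have := pin_twisted_comm (Qpq p q) (Pi.single i 1) T
      rw [hT, e, map_smul, LinearMap.smul_apply] at this
      refine (smul_eq_zero.1 this.symm).resolve_left ?_
      split_ifs <;> norm_num
    obtain ⟨c, rfl⟩ := pin_scalar_of_contract (Qpq p q) T hc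
    rw [reverse.commutes, ← map_mul] at h4
    have inj := (algebraMap ℝ (Cl p q)).injective
    rcases h4 with h4 | h4
    · rw [← map_one (algebraMap ℝ (Cl p q))] at h4
      rcases mul_self_eq_one_iff.1 (inj h4) with rfl | rfl
      · left; simp
      · right; simp
    · rw [← map_one (algebraMap ℝ (Cl p q)), ← map_neg] at h4
      have := inj h4
      nlinarith [mul_self_nonneg c]
end
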